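/- Let 1 ≤ p ≤ ∞ and α satisfy α > −1/p (α ≥ 0 for p = ∞). For any algebraic polynomial P_n of degree at most n−1, ‖(D_{x,2,2}P_n)(x)(1−x²)^α‖_p ≤ C n² ‖P_n(x)(1−x²)^α‖_p, where D_{x,2,2} = (1−x²) d²/dx² − 6x d/dx and C does not depend on n or P_n. -/

import Mathlib

open MeasureTheory Real Set
open scoped ENNReal

noncomputable section

/-- `R = x y − z √(1−x²) √(1−y²)`. -/
def Rker (x y z : ℝ) : ℝ := x * y - z * Real.sqrt (1 - x ^ 2) * Real.sqrt (1 - y ^ 2)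

/-- The kernel `B_y(x, z, R)` of the asymmetric generalised translation operator. -/
def Bker (y x z : ℝ) : ℝ :=
  2 * (Real.sqrt (1 - x ^ 2) * y + z * x * Real.sqrt (1 - y ^ 2) +
      Real.sqrt (1 - x ^ 2) * (1 - y) * (1 - z ^ 2)) ^ 2 - (1 - Rker x y z ^ 2)

/-- The asymmetric generalised translation operator `T_y(f, x)`. -/
def Tgen (y : ℝ) (f : ℝ → ℝ) (x : ℝ) : ℝ :=
  (4 / (Real.pi * (1 - x ^ 2) * (1 + y) ^ 2)) *
    ∫ z in (-1 : ℝ)..1, Bker y x z * f (Rker x y z) / Real.sqrt (1 - z ^ 2)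

/-- The Jacobi differential operator `D_{x,2,2} = (1−x²) d²/dx² − 6x d/dx`. -/
def Dop (f : ℝ → ℝ) (x : ℝ) : ℝ := (1 - x ^ 2) * deriv (deriv f) x - 6 * x * deriv f x

/-- Weighted `L^p` norm `‖f(x) (1−x²)^α‖_p` on `[−1,1]`. -/
def wnorm (p : ℝ≥0∞) (α : ℝ) (f : ℝ → ℝ) : ℝ≥0∞ :=
  eLpNorm (fun x => f x * (1 - x ^ 2) ^ α) p (volume.restrict (Set.Icc (-1 : ℝ) 1))

/-- `h` is absolutely continuous on every closed subinterval of `(−1,1)`: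
it is the integral of its derivative there. -/
def LocAC (h : ℝ → ℝ) : Prop :=
  ∀ a b : ℝ, -1 < a → a ≤ b → b < 1 →
    IntervalIntegrable (deriv h) MeasureTheory.volume a b ∧
      ∀ x ∈ Set.Icc a b, h x = h a + ∫ t in a..x, deriv h t

/-- The system `P` consists of the Jacobi polynomials for the weight `(1−x)^a (1+x)^b`,
normalised by `P n 1 = 1`. -/
def IsJacobiSystem (a b : ℝ) (P : ℕ → ℝ → ℝ) : Prop :=
  (∀ n : ℕ, ∃ q : Polynomial ℝ, q.natDegree = n ∧ ∀ x, P n x = q.eval x) ∧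
  (∀ m n : ℕ, m ≠ n →
    ∫ x in (-1 : ℝ)..1, P m x * P n x * (1 - x) ^ a * (1 + x) ^ b = 0) ∧
  (∀ n : ℕ, P n 1 = 1)

/-- Conditions on `p` and `α` in the main theorems. -/
def ParamOK (p : ℝ≥0∞) (α : ℝ) : Prop :=
  1 ≤ p ∧
  (p = 1 → 1 / 2 < α ∧ α ≤ 1) ∧
  (1 < p → p ≠ ⊤ → 1 - 1 / (2 * p.toReal) < α ∧ α < 3 / 2 - 1 / (2 * p.toReal)) ∧
  (p = ⊤ → 1 ≤ α ∧ α < 3 / 2)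

/-- Best approximation of `f` by algebraic polynomials of degree at most `n − 1`. -/
def bestE (p : ℝ≥0∞) (α : ℝ) (n : ℕ) (f : ℝ → ℝ) : ℝ≥0∞ :=
  ⨅ (q : Polynomial ℝ) (_ : q.natDegree ≤ n - 1), wnorm p α (fun x => f x - q.eval x)

/-- The generalised modulus of smoothness `ω(f, δ)`. -/
def wmod (p : ℝ≥0∞) (α : ℝ) (f : ℝ → ℝ) (δ : ℝ) : ℝ≥0∞ :=
  ⨆ t ∈ Set.Icc (-δ) δ, wnorm p α (fun x => Tgen (Real.cos t) f x - f x)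

/-- The Peetre K-functional between `L^p_α` and the weighted Sobolev-type space. -/
def Kfun (p : ℝ≥0∞) (α : ℝ) (f : ℝ → ℝ) (δ : ℝ) : ℝ≥0∞ :=
  ⨅ (g : ℝ → ℝ) (_ : LocAC (deriv g) ∧ wnorm p α g < ⊤ ∧ wnorm p α (Dop g) < ⊤),
    wnorm p α (fun x => f x - g x) + ENNReal.ofReal (δ ^ 2) * wnorm p α (Dop g)

namespace DPB

/-- Control of a polynomial and its first two derivatives at `1`. -/
def Bd (L : ℝ) (E : Polynomial ℂ) : Prop :=
  0 ≤ L ∧ ‖E.eval 1‖ ≤ 1 ∧ ‖E.derivative.eval 1‖ ≤ L ∧ ‖E.derivative.derivative.eval 1‖ ≤ L ^ 2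

lemma Bd.mul {L₁ L₂ : ℝ} {E₁ E₂ : Polynomial ℂ} (h₁ : Bd L₁ E₁) (h₂ : Bd L₂ E₂) :
    Bd (L₁ + L₂) (E₁ * E₂) := by
  obtain ⟨a0, a1, a2, a3⟩ := h₁
  obtain ⟨b0, b1, b2, b3⟩ := h₂
  refine ⟨by positivity, ?_, ?_, ?_⟩
  · rw [Polynomial.eval_mul, norm_mul]
    exact mul_le_one₀ a1 (norm_nonneg _) b1
  · simp only [Polynomial.derivative_mul, Polynomial.eval_add, Polynomial.eval_mul]
    refine (norm_add_le _ _).trans ?_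
    rw [norm_mul, norm_mul]
    have := mul_le_mul a2 b1 (norm_nonneg _) a0
    have := mul_le_mul a1 b2 (norm_nonneg _) zero_le_one
    linarith
  · simp only [Polynomial.derivative_mul, Polynomial.derivative_add, Polynomial.eval_add,
      Polynomial.eval_mul]
    refine (norm_add_le _ _).trans ?_
    refine (add_le_add (norm_add_le _ _) (norm_add_le _ _)).trans ?_
    simp only [norm_mul]
    have := mul_le_mul a3 b1 (norm_nonneg _) (by positivity)
    have := mul_le_mul a1 b3 (norm_nonneg _) zero_le_one
    have := mul_le_mul a2 b2 (norm_nonneg _) a0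
    nlinarith

lemma Bd.one : Bd 0 (1 : Polynomial ℂ) := by simp [Bd]

lemma Bd.X : Bd 1 (Polynomial.X : Polynomial ℂ) := by simp [Bd]

lemma Bd.pow {L : ℝ} {E : Polynomial ℂ} (h : Bd L E) (k : ℕ) : Bd (k * L) (E ^ k) := by
  induction k with
  | zero => simpa using Bd.one
  | succ k ih =>
    rw [pow_succ]
    convert ih.mul h using 1
    push_cast; ring

/-- The averaged geometric polynomial. -/
def geo (n : ℕ) : Polynomial ℂ := Polynomial.C ((n : ℂ)⁻¹) * ∑ j ∈ Finset.range n, Polynomial.X ^ j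

lemma avg_le (n : ℕ) (hn : 1 ≤ n) (f : ℕ → ℂ) (B : ℝ) (h : ∀ j < n, ‖f j‖ ≤ B) :
    ‖(n : ℂ)⁻¹ * ∑ j ∈ Finset.range n, f j‖ ≤ B := by
  rw [norm_mul, norm_inv, Complex.norm_natCast]
  have hn' : (0 : ℝ) < n := by exact_mod_cast hn
  rw [inv_mul_le_iff₀ hn']
  refine (norm_sum_le _ _).trans ?_
  refine (Finset.sum_le_sum (g := fun _ => B) ?_).trans ?_
  · intro i hi; exact h i (Finset.mem_range.1 hi)
  · simp

lemma Bd.geo (n : ℕ) (hn : 1 ≤ n) : Bd n (geo n) := by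
  have key : ∀ j < n, Bd n ((Polynomial.X : Polynomial ℂ) ^ j) := by
    intro j hj
    obtain ⟨a0, a1, a2, a3⟩ := Bd.X.pow j
    have hjn : (j : ℝ) * 1 ≤ n := by
      rw [mul_one]; exact_mod_cast hj.le
    exact ⟨by positivity, a1, a2.trans hjn, a3.trans (by gcongr)⟩
  refine ⟨by positivity, ?_, ?_, ?_⟩
  · rw [DPB.geo, Polynomial.eval_mul, Polynomial.eval_C, Polynomial.eval_finsetSum]
    exact avg_le n hn _ _ fun j hj => (key j hj).2.1
  · rw [DPB.geo, Polynomial.derivative_C_mul, Polynomial.derivative_sum, Polynomial.eval_mul,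
      Polynomial.eval_C, Polynomial.eval_finsetSum]
    exact avg_le n hn _ _ fun j hj => (key j hj).2.2.1
  · rw [DPB.geo, Polynomial.derivative_C_mul, Polynomial.derivative_sum,
      Polynomial.derivative_C_mul, Polynomial.derivative_sum, Polynomial.eval_mul,
      Polynomial.eval_C, Polynomial.eval_finsetSum]
    exact avg_le n hn _ _ fun j hj => (key j hj).2.2.2

lemma geo_one (n : ℕ) (hn : 1 ≤ n) : (geo n).eval 1 = 1 := by
  have : (n : ℂ) ≠ 0 := by exact_mod_cast (by omega : n ≠ 0)
  simp [geo, Polynomial.eval_finsetSum, this]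

lemma geo_natDegree (n : ℕ) : (geo n).natDegree ≤ n := by
  refine (Polynomial.natDegree_C_mul_le _ _).trans ?_
  refine Polynomial.natDegree_sum_le_of_forall_le _ _ ?_
  intro i hi
  simpa using (Finset.mem_range.1 hi).le

lemma geo_decay (n : ℕ) (hn : 1 ≤ n) (t : ℝ) (ht : |t| ≤ π) :
    ‖(geo n).eval (Complex.exp (t * Complex.I))‖ * (1 + n * |t|) ≤ 5 := by
  have hn' : (0 : ℝ) < n := by exact_mod_cast hn
  set z := Complex.exp (t * Complex.I) with hz
  have hz1 : ‖z‖ = 1 := Complex.norm_exp_ofReal_mul_I t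
  have e1 : (geo n).eval z = (n : ℂ)⁻¹ * ∑ j ∈ Finset.range n, z ^ j := by
    simp [geo, Polynomial.eval_finsetSum]
  have h1 : ‖(geo n).eval z‖ ≤ 1 := by
    rw [e1]
    refine avg_le n hn _ _ fun j _ => ?_
    simp [hz1]
  have h2 : ‖(geo n).eval z‖ * (n * |t|) ≤ π := by
    have e2 : ‖(geo n).eval z‖ * n * ‖z - 1‖ ≤ 2 := by
      have : (geo n).eval z * n * (z - 1) = z ^ n - 1 := by
        have hn0 : (n : ℂ) ≠ 0 := by exact_mod_cast (by omega : n ≠ 0)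
        rw [e1, ← geom_sum_mul]
        field_simp
      have h3 := congrArg norm this
      rw [norm_mul, norm_mul, Complex.norm_natCast] at h3
      rw [h3]
      refine (norm_sub_le _ _).trans ?_
      rw [norm_pow, hz1]; norm_num
    have e3 : ‖z - 1‖ ≥ 2 / π * |t| := by
      have h4 : ‖z - 1‖ = 2 * |Real.sin (t / 2)| := by
        rw [hz, mul_comm, Complex.norm_exp_I_mul_ofReal_sub_one]
        simp
      rw [h4]
      have h5 : |Real.sin (t / 2)| = Real.sin (|t| / 2) := by
        rcases abs_cases t with ⟨h, h'⟩ | ⟨h, h'⟩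
        · rw [h] at ht ⊢
          exact abs_of_nonneg (Real.sin_nonneg_of_nonneg_of_le_pi (by linarith) (by linarith [Real.pi_pos]))
        · rw [h] at ht ⊢
          rw [neg_div, Real.sin_neg]
          refine abs_of_nonpos (Real.sin_nonpos_of_nonpos_of_neg_pi_le (by linarith) (by linarith [Real.pi_pos]))
      rw [h5]
      have := Real.mul_le_sin (x := |t| / 2) (by positivity) (by linarith)
      linarith
    have h6 : ‖(geo n).eval z‖ * n * (2 / π * |t|) ≤ 2 := by
      refine le_trans ?_ e2
      gcongr
    have hpi := Real.pi_pos
    have h7 : ‖(geo n).eval z‖ * (n * |t|) * (2 / π) ≤ 2 := by linarith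
    rw [mul_div_assoc', div_le_iff₀ hpi] at h7
    linarith
  have : π < 4 := by linarith [Real.pi_lt_d2]
  linarith

/-- Fourier coefficients of polynomials on the circle. -/
lemma coeff_bound (R : Polynomial ℂ) (j : ℕ) :
    ‖R.coeff j‖ ≤ ∫ t in (-π)..π, ‖R.eval (Complex.exp (t * Complex.I))‖ := by
  have hpi := Real.pi_pos
  have key : ∫ t in (-π)..π, R.eval (Complex.exp (t * Complex.I)) * Complex.exp (-(j * t * Complex.I))
      = 2 * π * R.coeff j := by
    have e1 : ∀ t : ℝ, R.eval (Complex.exp (t * Complex.I)) * Complex.exp (-(j * t * Complex.I))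
        = ∑ l ∈ Finset.range (R.natDegree + 1 + j + 1),
            R.coeff l * Complex.exp ((((l : ℤ) - j : ℤ) * Complex.I) * t) := by
      intro t
      rw [Polynomial.eval_eq_sum_range' (n := R.natDegree + 1 + j + 1) (by omega), Finset.sum_mul]
      refine Finset.sum_congr rfl fun l _ => ?_
      rw [mul_assoc, ← Complex.exp_nat_mul, ← Complex.exp_add]
      congr 2
      push_cast
      ring
    simp_rw [e1]
    rw [intervalIntegral.integral_finsetSum]
    · rw [Finset.sum_eq_single j]
      · simp
        left; ring
      · intro l _ hl
        rw [intervalIntegral.integral_const_mul]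
        have hne : ((((l : ℤ) - j : ℤ) : ℂ) * Complex.I) ≠ 0 := by
          refine mul_ne_zero ?_ Complex.I_ne_zero
          exact_mod_cast (by omega : ((l : ℤ) - j : ℤ) ≠ 0)
        rw [integral_exp_mul_complex hne]
        have : Complex.exp ((((l : ℤ) - j : ℤ) : ℂ) * Complex.I * (π : ℝ)) =
            Complex.exp ((((l : ℤ) - j : ℤ) : ℂ) * Complex.I * (-π : ℝ)) := by
          rw [Complex.exp_eq_exp_iff_exists_int]
          refine ⟨(l : ℤ) - j, ?_⟩
          push_cast
          ring
        rw [this]; simp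
      · intro h
        exact absurd (Finset.mem_range.2 (by omega)) h
    · intro l _
      exact Continuous.intervalIntegrable (by fun_prop) _ _
  have h2 := congrArg norm key
  have h3 : ‖∫ t in (-π)..π, R.eval (Complex.exp (t * Complex.I)) * Complex.exp (-(j * t * Complex.I))‖
      ≤ ∫ t in (-π)..π, ‖R.eval (Complex.exp (t * Complex.I))‖ := by
    refine (intervalIntegral.norm_integral_le_integral_norm (by linarith)).trans (le_of_eq ?_)
    refine intervalIntegral.integral_congr fun t _ => ?_
    simp only [norm_mul]
    have : -((j : ℂ) * t * Complex.I) = ((-(j * t) : ℝ) : ℂ) * Complex.I := by push_cast; ring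
    rw [this, Complex.norm_exp_ofReal_mul_I, mul_one]
  rw [h2] at h3
  refine le_trans ?_ h3
  rw [norm_mul]
  have : ‖(2 * π : ℂ)‖ = 2 * π := by
    rw [norm_mul, Complex.norm_real, Real.norm_of_nonneg hpi.le]; simp
  rw [this]
  nlinarith [norm_nonneg (R.coeff j), Real.pi_gt_three]

end DPB

namespace DPB

lemma eval_one_bound (R : Polynomial ℂ) (D : ℕ) (hD : R.natDegree ≤ D) (I : ℝ)
    (hI : ∀ j, ‖R.coeff j‖ ≤ I) :
    ‖R.eval 1‖ ≤ (D + 1) * I := by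
  rw [Polynomial.eval_eq_sum_range' (n := D + 1) (by omega)]
  refine (norm_sum_le _ _).trans ?_
  refine (Finset.sum_le_sum (g := fun _ => I) ?_).trans ?_
  · intro i _; simpa using hI i
  · simp

/-- The operator `z d/dz`. -/
def zd (R : Polynomial ℂ) : Polynomial ℂ := Polynomial.X * R.derivative

lemma zd_coeff (R : Polynomial ℂ) (j : ℕ) : (zd R).coeff j = j * R.coeff j := by
  cases j with
  | zero => simp [zd]
  | succ j => simp [zd, Polynomial.coeff_X_mul, Polynomial.coeff_derivative]; ring

lemma zd_natDegree (R : Polynomial ℂ) (D : ℕ) (hD : R.natDegree ≤ D) : (zd R).natDegree ≤ D := by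
  rw [Polynomial.natDegree_le_iff_coeff_eq_zero] at hD ⊢
  intro N hN
  rw [zd_coeff, hD N hN, mul_zero]

lemma zd_coeff_bound (R : Polynomial ℂ) (D : ℕ) (hD : R.natDegree ≤ D) (I : ℝ)
    (hI : ∀ j, ‖R.coeff j‖ ≤ I) (j : ℕ) : ‖(zd R).coeff j‖ ≤ D * I := by
  have hI0 : 0 ≤ I := (norm_nonneg _).trans (hI 0)
  rw [zd_coeff]
  by_cases h : j ≤ D
  · rw [norm_mul, Complex.norm_natCast]
    have : (j : ℝ) ≤ D := by exact_mod_cast h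
    have := hI j
    gcongr
  · rw [Polynomial.natDegree_le_iff_coeff_eq_zero] at hD
    rw [hD j (by omega)]
    simp; positivity

lemma zd_hasDeriv (R : Polynomial ℂ) (t : ℝ) :
    HasDerivAt (fun t : ℝ => R.eval (Complex.exp (t * Complex.I)))
      (Complex.I * (zd R).eval (Complex.exp (t * Complex.I))) t := by
  have h1 : HasDerivAt (fun t : ℝ => Complex.exp (t * Complex.I))
      (Complex.exp (t * Complex.I) * (1 * Complex.I)) t := by
    have : HasDerivAt (fun t : ℝ => (t : ℂ) * Complex.I) (1 * Complex.I) t :=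
      (Complex.ofRealCLM.hasDerivAt (x := t)).mul_const _
    exact this.cexp
  have h2 := (R.hasDerivAt (Complex.exp (t * Complex.I))).comp t h1
  refine h2.congr_deriv ?_
  simp [zd]; ring

lemma exists_U (q : Polynomial ℝ) (N : ℕ) (hq : q.natDegree ≤ N) (θ : ℝ) :
    ∃ U : Polynomial ℂ, U.natDegree ≤ 2 * N ∧ ∀ t : ℝ,
      U.eval (Complex.exp (t * Complex.I)) =
        Complex.exp (t * Complex.I) ^ N * (q.eval (Real.cos (θ + t)) : ℝ) := by
  set V : Polynomial ℂ := Polynomial.C (Complex.exp (θ * Complex.I) / 2) * Polynomial.X ^ 2 +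
    Polynomial.C (Complex.exp (-(θ * Complex.I)) / 2) with hV
  refine ⟨∑ j ∈ Finset.range (N + 1), Polynomial.C ((q.coeff j : ℝ) : ℂ) *
    (Polynomial.X ^ (N - j) * V ^ j), ?_, ?_⟩
  · refine Polynomial.natDegree_sum_le_of_forall_le _ _ ?_
    intro j hj
    have hj' : j ≤ N := by have := Finset.mem_range.1 hj; omega
    refine (Polynomial.natDegree_C_mul_le _ _).trans ?_
    refine Polynomial.natDegree_mul_le.trans ?_
    have h1 : V.natDegree ≤ 2 := by
      rw [hV]; compute_degree
    have h2 := Polynomial.natDegree_pow_le_of_le j h1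
    have h3 : ((Polynomial.X : Polynomial ℂ) ^ (N - j)).natDegree ≤ N - j := by simp
    omega
  · intro t
    rw [Polynomial.eval_finsetSum, Polynomial.eval_eq_sum_range' (n := N + 1) (by omega)]
    push_cast
    rw [Finset.mul_sum]
    refine Finset.sum_congr rfl fun j hj => ?_
    have hj' : j ≤ N := by have := Finset.mem_range.1 hj; omega
    have h1 : V.eval (Complex.exp (t * Complex.I)) =
        Complex.exp (t * Complex.I) * Complex.cos (θ + t) := by
      rw [Complex.cos]
      simp only [hV, Polynomial.eval_add, Polynomial.eval_mul, Polynomial.eval_C,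
        Polynomial.eval_pow, Polynomial.eval_X]
      rw [mul_div_assoc', mul_add, ← Complex.exp_add, ← Complex.exp_add, ← Complex.exp_nat_mul,
        div_mul_eq_mul_div, ← Complex.exp_add, ← add_div]
      congr 3 <;> · push_cast; ring
    simp only [Polynomial.eval_mul, Polynomial.eval_C, Polynomial.eval_pow, Polynomial.eval_X, h1]
    obtain ⟨d, rfl⟩ := Nat.exists_eq_add_of_le hj'
    rw [Nat.add_sub_cancel_left, mul_pow, pow_add]
    ring

/-- First and second derivatives of `q (cos θ)`. -/
def T1 (q : Polynomial ℝ) (θ : ℝ) : ℝ := - Real.sin θ * q.derivative.eval (Real.cos θ)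
def T2 (q : Polynomial ℝ) (θ : ℝ) : ℝ :=
  Real.sin θ ^ 2 * q.derivative.derivative.eval (Real.cos θ) -
    Real.cos θ * q.derivative.eval (Real.cos θ)

lemma hasDeriv_T (q : Polynomial ℝ) (θ : ℝ) :
    HasDerivAt (fun θ => q.eval (Real.cos θ)) (T1 q θ) θ := by
  have := (q.hasDerivAt (Real.cos θ)).comp θ (Real.hasDerivAt_cos θ)
  refine this.congr_deriv ?_
  simp [T1]; ring

lemma hasDeriv_T1 (q : Polynomial ℝ) (θ : ℝ) :
    HasDerivAt (T1 q) (T2 q θ) θ := by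
  have h1 := (q.derivative.hasDerivAt (Real.cos θ)).comp θ (Real.hasDerivAt_cos θ)
  have := (Real.hasDerivAt_sin θ).neg.mul h1
  refine this.congr_deriv ?_
  simp [T2]; ring

lemma local_identities (R E : Polynomial ℂ) (q : Polynomial ℝ) (θ : ℝ)
    (h : ∀ t : ℝ, R.eval (Complex.exp (t * Complex.I)) =
      (q.eval (Real.cos (θ + t)) : ℝ) * E.eval (Complex.exp (t * Complex.I))) :
    R.eval 1 = (q.eval (Real.cos θ) : ℝ) * E.eval 1 ∧
    Complex.I * (zd R).eval 1 = (T1 q θ : ℝ) * E.eval 1 +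
      (q.eval (Real.cos θ) : ℝ) * (Complex.I * (zd E).eval 1) ∧
    Complex.I * (Complex.I * (zd (zd R)).eval 1) = (T2 q θ : ℝ) * E.eval 1 +
      2 * ((T1 q θ : ℝ) * (Complex.I * (zd E).eval 1)) +
      (q.eval (Real.cos θ) : ℝ) * (Complex.I * (Complex.I * (zd (zd E)).eval 1)) := by
  have dT : ∀ t : ℝ, HasDerivAt (fun t : ℝ => ((q.eval (Real.cos (θ + t)) : ℝ) : ℂ))
      (T1 q (θ + t) : ℝ) t := fun t =>
    ((hasDeriv_T q (θ + t)).comp_const_add θ t).ofReal_comp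
  have dT1 : ∀ t : ℝ, HasDerivAt (fun t : ℝ => ((T1 q (θ + t) : ℝ) : ℂ))
      (T2 q (θ + t) : ℝ) t := fun t =>
    ((hasDeriv_T1 q (θ + t)).comp_const_add θ t).ofReal_comp
  have h1 : ∀ t : ℝ, Complex.I * (zd R).eval (Complex.exp (t * Complex.I)) =
      (T1 q (θ + t) : ℝ) * E.eval (Complex.exp (t * Complex.I)) +
      (q.eval (Real.cos (θ + t)) : ℝ) * (Complex.I * (zd E).eval (Complex.exp (t * Complex.I))) := by
    intro t
    have a := zd_hasDeriv R t
    have b := (dT t).mul (zd_hasDeriv E t)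
    exact a.unique (b.congr_of_eventuallyEq (Filter.Eventually.of_forall h))
  have h2 : ∀ t : ℝ, Complex.I * (Complex.I * (zd (zd R)).eval (Complex.exp (t * Complex.I))) =
      ((T2 q (θ + t) : ℝ) * E.eval (Complex.exp (t * Complex.I)) +
      (T1 q (θ + t) : ℝ) * (Complex.I * (zd E).eval (Complex.exp (t * Complex.I)))) +
      ((T1 q (θ + t) : ℝ) * (Complex.I * (zd E).eval (Complex.exp (t * Complex.I))) +
      (q.eval (Real.cos (θ + t)) : ℝ) *
        (Complex.I * (Complex.I * (zd (zd E)).eval (Complex.exp (t * Complex.I))))) := by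
    intro t
    have a := (zd_hasDeriv (zd R) t).const_mul Complex.I
    have b := ((dT1 t).mul (zd_hasDeriv E t)).add
      ((dT t).mul ((zd_hasDeriv (zd E) t).const_mul Complex.I))
    exact a.unique (b.congr_of_eventuallyEq (Filter.Eventually.of_forall h1))
  refine ⟨by simpa using h 0, by simpa using h1 0, ?_⟩
  have := h2 0
  simp only [Complex.ofReal_zero, zero_mul, Complex.exp_zero, add_zero] at this
  rw [this]; ring

lemma core (k n : ℕ) (hn : 1 ≤ n) (q : Polynomial ℝ) (hq : q.natDegree ≤ n) (θ : ℝ) (I a : ℝ)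
    (hI : I = ∫ t in (-π)..π, |q.eval (Real.cos (θ + t))| *
      ‖(geo n).eval (Complex.exp (t * Complex.I))‖ ^ k) (ha : a = (k + 3) * n) :
    |q.eval (Real.cos θ)| ≤ a * I ∧ |T1 q θ| ≤ 2 * a ^ 2 * I ∧ |T2 q θ| ≤ 7 * a ^ 3 * I := by
  obtain ⟨U, hU, hU'⟩ := exists_U q n hq θ
  set E : Polynomial ℂ := Polynomial.X ^ n * geo n ^ k with hE
  set R : Polynomial ℂ := U * geo n ^ k with hR
  have hn' : (1 : ℝ) ≤ n := by exact_mod_cast hn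
  have h : ∀ t : ℝ, R.eval (Complex.exp (t * Complex.I)) =
      (q.eval (Real.cos (θ + t)) : ℝ) * E.eval (Complex.exp (t * Complex.I)) := by
    intro t
    rw [hR, hE, Polynomial.eval_mul, hU']
    simp only [Polynomial.eval_mul, Polynomial.eval_pow, Polynomial.eval_X]
    ring
  have hRI : ∀ j, ‖R.coeff j‖ ≤ I := by
    intro j
    refine (coeff_bound R j).trans (le_of_eq ?_)
    rw [hI]
    refine intervalIntegral.integral_congr fun t _ => ?_
    simp only [h t, hE, Polynomial.eval_mul, Polynomial.eval_pow, Polynomial.eval_X, norm_mul,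
      norm_pow, Complex.norm_exp_ofReal_mul_I, Complex.norm_real, Real.norm_eq_abs, one_pow,
      one_mul]
  have hI0 : 0 ≤ I := (norm_nonneg _).trans (hRI 0)
  set D : ℕ := (k + 2) * n with hD
  have hRD : R.natDegree ≤ D := by
    refine Polynomial.natDegree_mul_le.trans ?_
    have := Polynomial.natDegree_pow_le_of_le k (geo_natDegree n)
    rw [hD]; nlinarith
  have hDa : (D : ℝ) + 1 ≤ a := by
    rw [hD, ha]; push_cast; nlinarith
  have hD0 : (0 : ℝ) ≤ D := by positivity
  have ha1 : 1 ≤ a := by linarith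
  have b0 : ‖R.eval 1‖ ≤ a * I := (eval_one_bound R D hRD I hRI).trans (by gcongr)
  have b1 : ‖(zd R).eval 1‖ ≤ a ^ 2 * I := by
    refine (eval_one_bound (zd R) D (zd_natDegree R D hRD) _ (zd_coeff_bound R D hRD I hRI)).trans ?_
    have : (D : ℝ) ≤ a := by linarith
    calc ((D : ℝ) + 1) * (D * I) ≤ a * (a * I) := by gcongr
      _ = a ^ 2 * I := by ring
  have b2 : ‖(zd (zd R)).eval 1‖ ≤ a ^ 3 * I := by
    refine (eval_one_bound (zd (zd R)) D (zd_natDegree _ D (zd_natDegree R D hRD)) _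
      (zd_coeff_bound _ D (zd_natDegree R D hRD) _ (zd_coeff_bound R D hRD I hRI))).trans ?_
    have : (D : ℝ) ≤ a := by linarith
    calc ((D : ℝ) + 1) * (D * (D * I)) ≤ a * (a * (a * I)) := by gcongr
      _ = a ^ 3 * I := by ring
  have hBd := (Bd.X.pow n).mul ((Bd.geo n hn).pow k)
  rw [← hE] at hBd
  obtain ⟨-, -, c1, c2⟩ := hBd
  have hL : (n : ℝ) * 1 + k * n ≤ a := by rw [ha]; nlinarith
  have hL0 : 0 ≤ (n : ℝ) * 1 + k * n := by positivity
  have e0 : E.eval 1 = 1 := by simp [hE, geo_one n hn]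
  have e1 : ‖(zd E).eval 1‖ ≤ a := by
    simp only [zd, Polynomial.eval_mul, Polynomial.eval_X, one_mul]; linarith
  have e2 : ‖(zd (zd E)).eval 1‖ ≤ 2 * a ^ 2 := by
    simp only [zd, Polynomial.eval_mul, Polynomial.eval_X, one_mul, Polynomial.derivative_mul,
      Polynomial.derivative_X, Polynomial.eval_add]
    refine (norm_add_le _ _).trans ?_
    nlinarith
  obtain ⟨i0, i1, i2⟩ := local_identities R E q θ h
  rw [e0, mul_one] at i0 i1 i2
  have f0 : |q.eval (Real.cos θ)| ≤ a * I := by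
    rw [← Real.norm_eq_abs, ← Complex.norm_real, ← i0]; exact b0
  have f1 : |T1 q θ| ≤ 2 * a ^ 2 * I := by
    rw [← Real.norm_eq_abs, ← Complex.norm_real, ← sub_eq_of_eq_add i1]
    refine (norm_sub_le _ _).trans ?_
    simp only [norm_mul, Complex.norm_I, one_mul, Complex.norm_real, Real.norm_eq_abs]
    have := mul_le_mul f0 e1 (norm_nonneg _) (by positivity)
    nlinarith
  refine ⟨f0, f1, ?_⟩
  have i2' := i2
  rw [add_assoc] at i2'
  rw [← Real.norm_eq_abs, ← Complex.norm_real, ← sub_eq_of_eq_add i2']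
  refine (norm_sub_le _ _).trans ?_
  refine (add_le_add_right (norm_add_le _ _) _).trans ?_
  simp only [norm_mul, Complex.norm_I, one_mul, Complex.norm_real, Real.norm_eq_abs,
    Complex.norm_ofNat]
  have g1 := mul_le_mul f0 e2 (norm_nonneg _) (by positivity)
  have g2 := mul_le_mul f1 e1 (norm_nonneg _) (by positivity)
  nlinarith

end DPB

namespace DPB

/-- The localisation kernel. -/
def kr (n k : ℕ) (θ s : ℝ) : ℝ := n / (1 + n * |θ - s|) ^ k

lemma kr_nonneg (n k : ℕ) (θ s : ℝ) : 0 ≤ kr n k θ s := by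
  unfold kr; positivity

lemma kr_den (n : ℕ) (x : ℝ) : 0 < 1 + (n : ℝ) * |x| := by positivity

lemma kr_cont (n k : ℕ) : Continuous (fun z : ℝ × ℝ => kr n k z.1 z.2) := by
  unfold kr
  refine Continuous.div (by fun_prop) (by fun_prop) fun z => ?_
  have := kr_den n (z.1 - z.2)
  positivity

lemma kr_cont_right (n k : ℕ) (θ : ℝ) : Continuous (kr n k θ) :=
  (kr_cont n k).comp (by fun_prop : Continuous fun s : ℝ => (θ, s))

lemma kr_shift (n k : ℕ) (hn : 1 ≤ n) (θ ξ s : ℝ) (h : |ξ - θ| ≤ 1 / n) :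
    kr n k ξ s ≤ 2 ^ k * kr n k θ s := by
  have hn' : (0 : ℝ) < n := by exact_mod_cast hn
  unfold kr
  have h1 : 1 + n * |θ - s| ≤ 2 * (1 + n * |ξ - s|) := by
    have h2 : |θ - s| ≤ |ξ - θ| + |ξ - s| := by
      rw [abs_sub_comm ξ θ]; exact abs_sub_le θ ξ s
    have h3 : n * |ξ - θ| ≤ 1 := by rw [le_div_iff₀ hn'] at h; linarith
    have h4 := abs_nonneg (ξ - s)
    nlinarith
  have d1 := kr_den n (θ - s)
  have d2 := kr_den n (ξ - s)
  rw [mul_div_assoc', div_le_div_iff₀ (by positivity) (by positivity)]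
  have h5 : (1 + n * |θ - s|) ^ k ≤ 2 ^ k * (1 + n * |ξ - s|) ^ k := by
    rw [← mul_pow]; gcongr
  nlinarith

def Gr (n k : ℕ) (q : Polynomial ℝ) (θ : ℝ) : ℝ :=
  ∫ s in (0 : ℝ)..π, |q.eval (Real.cos s)| * kr n k θ s

lemma Gr_integrand_cont (n k : ℕ) (q : Polynomial ℝ) (θ : ℝ) :
    Continuous fun s => |q.eval (Real.cos s)| * kr n k θ s :=
  (q.continuous.comp Real.continuous_cos).abs.mul (kr_cont_right n k θ)

lemma Gr_nonneg (n k : ℕ) (q : Polynomial ℝ) (θ : ℝ) : 0 ≤ Gr n k q θ :=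
  intervalIntegral.integral_nonneg Real.pi_pos.le fun s _ =>
    mul_nonneg (abs_nonneg _) (kr_nonneg _ _ _ _)

lemma Gr_shift (n k : ℕ) (hn : 1 ≤ n) (q : Polynomial ℝ) (θ ξ : ℝ) (h : |ξ - θ| ≤ 1 / n) :
    Gr n k q ξ ≤ 2 ^ k * Gr n k q θ := by
  unfold Gr
  rw [← intervalIntegral.integral_const_mul]
  refine intervalIntegral.integral_mono_on Real.pi_pos.le
    ((Gr_integrand_cont n k q ξ).intervalIntegrable _ _)
    (((Gr_integrand_cont n k q θ).const_mul _).intervalIntegrable _ _) fun s _ => ?_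
  have := mul_le_mul_of_nonneg_left (kr_shift n k hn θ ξ s h) (abs_nonneg (q.eval (Real.cos s)))
  linarith

lemma kr_anti (n k : ℕ) (θ s s' : ℝ) (h : |θ - s'| ≤ |θ - s|) : kr n k θ s ≤ kr n k θ s' := by
  unfold kr
  have d1 := kr_den n (θ - s')
  gcongr

lemma fold (n k : ℕ) (hn : 1 ≤ n) (q : Polynomial ℝ) (θ : ℝ) (h0 : 0 ≤ θ) (h1 : θ ≤ π) :
    n * ∫ t in (-π)..π, |q.eval (Real.cos (θ + t))| *
      ‖(geo n).eval (Complex.exp (t * Complex.I))‖ ^ k ≤ 5 ^ k * 3 * Gr n k q θ := by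
  have hpi := Real.pi_pos
  have hn' : (0 : ℝ) < n := by exact_mod_cast hn
  set g : ℝ → ℝ := fun s => |q.eval (Real.cos s)| * kr n k θ s with hg
  have gc : Continuous g := Gr_integrand_cont n k q θ
  have g0 : ∀ s, 0 ≤ g s := fun s => mul_nonneg (abs_nonneg _) (kr_nonneg _ _ _ _)
  have s1 : n * ∫ t in (-π)..π, |q.eval (Real.cos (θ + t))| *
      ‖(geo n).eval (Complex.exp (t * Complex.I))‖ ^ k ≤ 5 ^ k * ∫ t in (-π)..π, g (θ + t) := by
    rw [← intervalIntegral.integral_const_mul, ← intervalIntegral.integral_const_mul]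
    refine intervalIntegral.integral_mono_on (by linarith) ?_ ?_ fun t ht => ?_
    · refine Continuous.intervalIntegrable ?_ _ _
      have := q.continuous
      have := (geo n).continuous
      fun_prop
    · exact Continuous.intervalIntegrable (by fun_prop) _ _
    · have hd := geo_decay n hn t (abs_le.2 ⟨ht.1, ht.2⟩)
      have d := kr_den n t
      have hd2 : ‖(geo n).eval (Complex.exp (t * Complex.I))‖ ^ k ≤ 5 ^ k / (1 + n * |t|) ^ k := by
        rw [← div_pow]
        refine pow_le_pow_left₀ (norm_nonneg _) ?_ k
        rwa [le_div_iff₀ d]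
      simp only [hg, kr]
      rw [show θ - (θ + t) = -t by ring, abs_neg]
      calc _ ≤ (n : ℝ) * (|q.eval (Real.cos (θ + t))| * (5 ^ k / (1 + n * |t|) ^ k)) := by gcongr
        _ = _ := by ring
  refine s1.trans ?_
  rw [mul_assoc]
  refine mul_le_mul_of_nonneg_left ?_ (by positivity)
  rw [intervalIntegral.integral_comp_add_left]
  have s2 : ∫ x in (θ + -π)..(θ + π), g x ≤ ∫ x in (-π)..(2 * π), g x :=
    intervalIntegral.integral_mono_interval (by linarith) (by linarith) (by linarith)
      (Filter.Eventually.of_forall g0) (gc.intervalIntegrable _ _)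
  refine s2.trans ?_
  rw [← intervalIntegral.integral_add_adjacent_intervals (b := 0) (gc.intervalIntegrable _ _)
    (gc.intervalIntegrable _ _), ← intervalIntegral.integral_add_adjacent_intervals (a := 0)
    (b := π) (c := 2 * π) (gc.intervalIntegrable _ _) (gc.intervalIntegrable _ _)]
  have s3 : ∫ x in (-π)..0, g x ≤ Gr n k q θ := by
    have : ∫ x in (-π)..0, g x = ∫ x in (0 : ℝ)..π, g (-x) := by
      rw [intervalIntegral.integral_comp_neg]; simp
    rw [this]
    refine intervalIntegral.integral_mono_on hpi.le ?_ (gc.intervalIntegrable _ _) fun s hs => ?_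
    · exact Continuous.intervalIntegrable (by fun_prop) _ _
    · simp only [hg, Real.cos_neg]
      refine mul_le_mul_of_nonneg_left (kr_anti _ _ _ _ _ ?_) (abs_nonneg _)
      rw [abs_of_nonneg (by linarith [hs.1] : 0 ≤ θ - -s), abs_le]
      constructor <;> linarith [hs.1]
  have s4 : ∫ x in π..(2 * π), g x ≤ Gr n k q θ := by
    have : ∫ x in π..(2 * π), g x = ∫ x in (0 : ℝ)..π, g (2 * π - x) := by
      rw [intervalIntegral.integral_comp_sub_left]; ring_nf
    rw [this]
    refine intervalIntegral.integral_mono_on hpi.le ?_ (gc.intervalIntegrable _ _) fun s hs => ?_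
    · exact Continuous.intervalIntegrable (by fun_prop) _ _
    · simp only [hg, Real.cos_two_pi_sub]
      refine mul_le_mul_of_nonneg_left (kr_anti _ _ _ _ _ ?_) (abs_nonneg _)
      rw [abs_of_nonpos (by linarith [hs.2] : θ - (2 * π - s) ≤ 0), abs_le]
      constructor <;> linarith [hs.2]
  have s5 : ∫ x in (0 : ℝ)..π, g x = Gr n k q θ := rfl
  linarith

/-- The constant in the pointwise bounds. -/
def c0 (k : ℕ) : ℝ := 7 * (k + 3) ^ 3 * (5 ^ k * 3)

lemma c0_pos (k : ℕ) : 0 < c0 k := by unfold c0; positivity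

lemma pointwise (k n : ℕ) (hn : 1 ≤ n) (q : Polynomial ℝ) (hq : q.natDegree ≤ n) (θ : ℝ)
    (h0 : 0 ≤ θ) (h1 : θ ≤ π) :
    |T1 q θ| ≤ c0 k * n * Gr n k q θ ∧ |T2 q θ| ≤ c0 k * n ^ 2 * Gr n k q θ := by
  obtain ⟨-, b, c⟩ := core k n hn q hq θ _ _ rfl rfl
  have hf := fold n k hn q θ h0 h1
  set I := ∫ t in (-π)..π, |q.eval (Real.cos (θ + t))| *
      ‖(geo n).eval (Complex.exp (t * Complex.I))‖ ^ k with hI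
  have hn' : (0 : ℝ) < n := by exact_mod_cast hn
  have hG := Gr_nonneg n k q θ
  have hk : (0 : ℝ) ≤ k := by positivity
  constructor
  · refine b.trans ?_
    calc 2 * ((k + 3) * n : ℝ) ^ 2 * I = 2 * (k + 3) ^ 2 * n * (n * I) := by ring
      _ ≤ 2 * (k + 3) ^ 2 * n * (5 ^ k * 3 * Gr n k q θ) := by gcongr
      _ ≤ (7 * (k + 3) ^ 3) * n * (5 ^ k * 3 * Gr n k q θ) := by
        gcongr ?_ * _ * _
        nlinarith [sq_nonneg ((k : ℝ) + 3)]
      _ = _ := by unfold c0; ring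
  · refine c.trans ?_
    calc 7 * ((k + 3) * n : ℝ) ^ 3 * I = 7 * (k + 3) ^ 3 * n ^ 2 * (n * I) := by ring
      _ ≤ 7 * (k + 3) ^ 3 * n ^ 2 * (5 ^ k * 3 * Gr n k q θ) := by gcongr
      _ = _ := by unfold c0; ring

lemma mid_bound {a b ξ : ℝ} (h : ξ ∈ Set.uIcc a b) (N : ℝ) (hab : |a - b| ≤ N) : |ξ - a| ≤ N := by
  refine le_trans ?_ hab
  have := Set.abs_sub_left_of_mem_uIcc h
  rwa [abs_sub_comm b a] at this

/-- Bound for the derivative `q'(cos θ)`. -/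
lemma pointwise_q' (k n : ℕ) (hn : 1 ≤ n) (q : Polynomial ℝ) (hq : q.natDegree ≤ n) (θ : ℝ)
    (h0 : 0 < θ) (h1 : θ < π) :
    |q.derivative.eval (Real.cos θ)| ≤ 2 * 2 ^ k * c0 k * n ^ 2 * Gr n k q θ := by
  have hpi := Real.pi_pos
  have hpi3 := Real.pi_gt_three
  have hpi4 : π < 4 := by linarith [Real.pi_lt_d2]
  have hn' : (1 : ℝ) ≤ n := by exact_mod_cast hn
  have hG := Gr_nonneg n k q θ
  have hc := c0_pos k
  have h2k : (1 : ℝ) ≤ 2 ^ k := one_le_pow₀ (by norm_num)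
  have hs : 0 < Real.sin θ := Real.sin_pos_of_pos_of_lt_pi h0 h1
  have hT : |T1 q θ| = Real.sin θ * |q.derivative.eval (Real.cos θ)| := by
    rw [T1, abs_mul, abs_neg, abs_of_pos hs]
  -- general MVT step
  have mvt : ∀ e : ℝ, T1 q e = 0 → 0 ≤ e → e ≤ π → |θ - e| ≤ 1 / n →
      |T1 q θ| ≤ (c0 k * n ^ 2 * (2 ^ k * Gr n k q θ)) * |θ - e| := by
    intro e he he0 he1 hd
    have := (convex_uIcc θ e).norm_image_sub_le_of_norm_hasDerivWithin_le (f := T1 q)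
      (f' := T2 q) (C := c0 k * n ^ 2 * (2 ^ k * Gr n k q θ)) (x := e) (y := θ)
      (fun x _ => (hasDeriv_T1 q x).hasDerivWithinAt) ?_ Set.right_mem_uIcc Set.left_mem_uIcc
    · rw [he, sub_zero, Real.norm_eq_abs, Real.norm_eq_abs] at this
      exact this
    · intro x hx
      have hx' := mid_bound hx _ hd
      rw [Set.mem_uIcc] at hx
      have hx0 : 0 ≤ x := by rcases hx with h | h <;> linarith [h.1]
      have hx1 : x ≤ π := by rcases hx with h | h <;> linarith [h.2]
      refine (pointwise k n hn q hq x hx0 hx1).2.trans ?_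
      have := Gr_shift n k hn q θ x hx'
      gcongr
  have hinv : 1 / (n : ℝ) ≤ 1 := by rw [div_le_one (by linarith)]; exact hn'
  set Q := |q.derivative.eval (Real.cos θ)| with hQ
  have hQ0 : 0 ≤ Q := abs_nonneg _
  by_cases ha : θ ≤ 1 / n
  · have hm := mvt 0 (by simp [T1]) le_rfl hpi.le (by rw [sub_zero, abs_of_pos h0]; exact ha)
    rw [hT, sub_zero, abs_of_pos h0] at hm
    have hsin := Real.mul_le_sin h0.le (by linarith)
    have h3 : 1 / 2 * θ ≤ Real.sin θ := by
      refine le_trans ?_ hsin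
      gcongr ?_ * _
      rw [div_le_div_iff₀ (by norm_num) hpi]; linarith
    have h4 : 1 / 2 * θ * Q ≤ c0 k * n ^ 2 * (2 ^ k * Gr n k q θ) * θ :=
      le_trans (by gcongr) hm
    have h5 : 1 / 2 * Q ≤ c0 k * n ^ 2 * (2 ^ k * Gr n k q θ) := by
      refine le_of_mul_le_mul_right ?_ h0
      linarith
    linarith
  by_cases hb : π - θ ≤ 1 / n
  · have hpos : 0 < π - θ := by linarith
    have hab : |θ - π| = π - θ := by rw [abs_sub_comm, abs_of_pos hpos]
    have hm := mvt π (by simp [T1]) hpi.le le_rfl (by rw [hab]; exact hb)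
    rw [hT, hab] at hm
    have hsin := Real.mul_le_sin hpos.le (by linarith)
    rw [Real.sin_pi_sub] at hsin
    have h3 : 1 / 2 * (π - θ) ≤ Real.sin θ := by
      refine le_trans ?_ hsin
      gcongr ?_ * _
      rw [div_le_div_iff₀ (by norm_num) hpi]; linarith
    have h4 : 1 / 2 * (π - θ) * Q ≤ c0 k * n ^ 2 * (2 ^ k * Gr n k q θ) * (π - θ) :=
      le_trans (by gcongr) hm
    have h5 : 1 / 2 * Q ≤ c0 k * n ^ 2 * (2 ^ k * Gr n k q θ) := by
      refine le_of_mul_le_mul_right ?_ hpos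
      linarith
    linarith
  · push Not at ha hb
    have hsin : 1 / 2 * (1 / n) ≤ Real.sin θ := by
      have h2π : 1 / 2 ≤ 2 / π := by rw [div_le_div_iff₀ (by norm_num) hpi]; linarith
      have hi : 0 < 1 / (n : ℝ) := by positivity
      rcases le_total θ (π / 2) with h | h
      · refine le_trans ?_ (Real.mul_le_sin h0.le h)
        gcongr
      · have := Real.mul_le_sin (x := π - θ) (by linarith) (by linarith)
        rw [Real.sin_pi_sub] at this
        refine le_trans ?_ this
        gcongr
    have hp := (pointwise k n hn q hq θ h0.le h1.le).1
    rw [hT] at hp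
    have h4 : 1 / 2 * (1 / n) * Q ≤ c0 k * n * Gr n k q θ := le_trans (by gcongr) hp
    have h5 : Q ≤ 2 * c0 k * n ^ 2 * Gr n k q θ := by
      have : Q = 2 * n * (1 / 2 * (1 / n) * Q) := by field_simp
      rw [this]
      calc 2 * n * (1 / 2 * (1 / n) * Q) ≤ 2 * n * (c0 k * n * Gr n k q θ) := by gcongr
        _ = _ := by ring
    refine h5.trans ?_
    gcongr ?_ * _ * _ * _
    linarith

lemma pointwise_D (k n : ℕ) (hn : 1 ≤ n) (q : Polynomial ℝ) (hq : q.natDegree ≤ n) (θ : ℝ)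
    (h0 : 0 < θ) (h1 : θ < π) :
    |(1 - Real.cos θ ^ 2) * q.derivative.derivative.eval (Real.cos θ) -
      6 * Real.cos θ * q.derivative.eval (Real.cos θ)| ≤
      11 * 2 ^ k * c0 k * n ^ 2 * Gr n k q θ := by
  have e : (1 - Real.cos θ ^ 2) * q.derivative.derivative.eval (Real.cos θ) -
      6 * Real.cos θ * q.derivative.eval (Real.cos θ) =
      T2 q θ - 5 * (Real.cos θ * q.derivative.eval (Real.cos θ)) := by
    rw [T2, Real.sin_sq]; ring
  rw [e]
  have hG := Gr_nonneg n k q θ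
  have hc := c0_pos k
  have h2k : (1 : ℝ) ≤ 2 ^ k := one_le_pow₀ (by norm_num)
  have a1 := (pointwise k n hn q hq θ h0.le h1.le).2
  have a2 := pointwise_q' k n hn q hq θ h0 h1
  have a3 : |Real.cos θ * q.derivative.eval (Real.cos θ)| ≤ |q.derivative.eval (Real.cos θ)| := by
    rw [abs_mul]
    exact mul_le_of_le_one_left (abs_nonneg _) (Real.abs_cos_le_one θ)
  have a4 : c0 k * n ^ 2 * Gr n k q θ ≤ 2 ^ k * (c0 k * n ^ 2 * Gr n k q θ) :=
    le_mul_of_one_le_left (by positivity) h2k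
  refine (abs_sub _ _).trans ?_
  rw [abs_mul 5, abs_of_pos (by norm_num : (0 : ℝ) < 5)]
  nlinarith

lemma pointwise_diff (k n : ℕ) (hn : 1 ≤ n) (q : Polynomial ℝ) (hq : q.natDegree ≤ n) (θ σ δ : ℝ)
    (hδ : δ ≤ 1) (hd : |θ - σ| ≤ δ / n)
    (h0 : 0 ≤ θ) (h1 : θ ≤ π) (h0' : 0 ≤ σ) (h1' : σ ≤ π) :
    |q.eval (Real.cos θ)| ≤ |q.eval (Real.cos σ)| + c0 k * 2 ^ k * δ * Gr n k q θ := by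
  have hn' : (1 : ℝ) ≤ n := by exact_mod_cast hn
  have hG := Gr_nonneg n k q θ
  have hc := c0_pos k
  have := (convex_uIcc θ σ).norm_image_sub_le_of_norm_hasDerivWithin_le
      (f := fun θ => q.eval (Real.cos θ))
      (f' := T1 q) (C := c0 k * n * (2 ^ k * Gr n k q θ)) (x := σ) (y := θ)
      (fun x _ => (hasDeriv_T q x).hasDerivWithinAt) ?_ Set.right_mem_uIcc Set.left_mem_uIcc
  · rw [Real.norm_eq_abs, Real.norm_eq_abs] at this
    have h2 : c0 k * n * (2 ^ k * Gr n k q θ) * |θ - σ| ≤ c0 k * 2 ^ k * δ * Gr n k q θ := by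
      calc _ ≤ c0 k * n * (2 ^ k * Gr n k q θ) * (δ / n) := by gcongr
        _ = _ := by field_simp
    have h3 := abs_sub_abs_le_abs_sub (q.eval (Real.cos θ)) (q.eval (Real.cos σ))
    linarith
  · intro x hx
    have hx' := mid_bound hx (1 / n) (hd.trans (by gcongr))
    rw [Set.mem_uIcc] at hx
    have hx0 : 0 ≤ x := by rcases hx with h | h <;> linarith [h.1]
    have hx1 : x ≤ π := by rcases hx with h | h <;> linarith [h.2]
    refine (pointwise k n hn q hq x hx0 hx1).1.trans ?_
    have := Gr_shift n k hn q θ x hx'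
    gcongr

end DPB

namespace DPB

/-- The measure on `(0, π)`. -/
def nu : Measure ℝ := volume.restrict (Ioo 0 π)

/-- Regularised weight. -/
def wn (n : ℕ) (γ θ : ℝ) : ℝ := (Real.sin θ + 1 / n) ^ γ

lemma base_pos (n : ℕ) (hn : 1 ≤ n) {θ : ℝ} (h0 : 0 ≤ θ) (h1 : θ ≤ π) :
    0 < Real.sin θ + 1 / n := by
  have hn' : (0 : ℝ) < n := by exact_mod_cast hn
  have := Real.sin_nonneg_of_nonneg_of_le_pi h0 h1
  positivity

lemma wn_pos (n : ℕ) (hn : 1 ≤ n) (γ : ℝ) {θ : ℝ} (h0 : 0 ≤ θ) (h1 : θ ≤ π) : 0 < wn n γ θ :=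
  Real.rpow_pos_of_pos (base_pos n hn h0 h1) _

lemma base_compare (n : ℕ) (hn : 1 ≤ n) {θ s : ℝ} (h0 : 0 ≤ θ) (h1 : θ ≤ π) :
    Real.sin s + 1 / n ≤ (Real.sin θ + 1 / n) * (1 + n * |θ - s|) := by
  have hn' : (0 : ℝ) < n := by exact_mod_cast hn
  have hs := Real.sin_nonneg_of_nonneg_of_le_pi h0 h1
  have h2 : Real.sin s - Real.sin θ ≤ |θ - s| := by
    have := Real.abs_sin_sub_sin_le s θ
    rw [abs_sub_comm θ s]
    exact (le_abs_self _).trans this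
  have h3 : (Real.sin θ + 1 / n) * (1 + n * |θ - s|) =
      Real.sin θ + 1 / n + |θ - s| + n * |θ - s| * Real.sin θ := by field_simp; ring
  rw [h3]
  have : 0 ≤ n * |θ - s| * Real.sin θ := by positivity
  linarith

lemma wn_compare (n : ℕ) (hn : 1 ≤ n) (γ : ℝ) (g : ℕ) (hg : |γ| ≤ g) {θ s : ℝ}
    (h0 : 0 ≤ θ) (h1 : θ ≤ π) (h0' : 0 ≤ s) (h1' : s ≤ π) :
    wn n γ s ≤ wn n γ θ * (1 + n * |θ - s|) ^ g := by
  have b1 := base_pos n hn h0 h1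
  have b2 := base_pos n hn h0' h1'
  have d := kr_den n (θ - s)
  have d1 : 1 ≤ 1 + (n : ℝ) * |θ - s| := by
    have : 0 ≤ (n : ℝ) * |θ - s| := by positivity
    linarith
  have hpow : (1 + (n : ℝ) * |θ - s|) ^ |γ| ≤ (1 + n * |θ - s|) ^ g := by
    rw [← Real.rpow_natCast]
    exact Real.rpow_le_rpow_of_exponent_le d1 hg
  have hw := (wn_pos n hn γ h0 h1).le
  refine le_trans ?_ (mul_le_mul_of_nonneg_left hpow hw)
  unfold wn
  rcases le_total 0 γ with h | h
  · rw [abs_of_nonneg h, ← Real.mul_rpow b1.le d.le]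
    exact Real.rpow_le_rpow b2.le (base_compare n hn h0 h1) h
  · rw [abs_of_nonpos h]
    have hc := base_compare n hn (θ := s) (s := θ) h0' h1'
    rw [abs_sub_comm] at hc
    have := Real.rpow_le_rpow_of_nonpos b1 hc h
    rw [Real.mul_rpow b2.le d.le] at this
    rw [Real.rpow_neg d.le, ← div_eq_mul_inv, le_div_iff₀ (Real.rpow_pos_of_pos d _)]
    exact this

lemma lint_poisson (n : ℕ) (hn : 1 ≤ n) (θ : ℝ) :
    ∫⁻ s, ENNReal.ofReal (n * (1 + (n * s - n * θ) ^ 2)⁻¹) = ENNReal.ofReal π := by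
  have hn' : (0 : ℝ) < n := by exact_mod_cast hn
  have hi0 : Integrable (fun s : ℝ => (1 + (s - n * θ) ^ 2)⁻¹) :=
    integrable_inv_one_add_sq.comp_sub_right (n * θ)
  have hi : Integrable (fun s : ℝ => (1 + (n * s - n * θ) ^ 2)⁻¹) :=
    hi0.comp_mul_left' hn'.ne'
  rw [← ofReal_integral_eq_lintegral_ofReal (hi.const_mul _)
    (Filter.Eventually.of_forall fun s => by positivity)]
  congr 1
  rw [integral_const_mul]
  rw [Measure.integral_comp_mul_left (fun s : ℝ => (1 + (s - n * θ) ^ 2)⁻¹) (n : ℝ)]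
  rw [integral_sub_right_eq_self (fun s : ℝ => (1 + s ^ 2)⁻¹), integral_univ_inv_one_add_sq,
    abs_of_pos (by positivity)]
  simp only [smul_eq_mul]; field_simp

lemma kr_symm (n k : ℕ) (θ s : ℝ) : kr n k θ s = kr n k s θ := by
  unfold kr; rw [abs_sub_comm]

lemma kr_le (n k g : ℕ) (hk : g + 2 ≤ k) (θ s : ℝ) :
    kr n k θ s * (1 + n * |θ - s|) ^ g ≤ n * (1 + (n * s - n * θ) ^ 2)⁻¹ := by
  have d := kr_den n (θ - s)
  have d0 : 0 ≤ (n : ℝ) * |θ - s| := by positivity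
  unfold kr
  rw [div_mul_eq_mul_div, div_le_iff₀ (by positivity), mul_assoc]
  refine mul_le_mul_of_nonneg_left ?_ (by positivity)
  rw [inv_mul_eq_div, le_div_iff₀ (by positivity)]
  have h1 : 1 + (n * s - n * θ) ^ 2 ≤ (1 + n * |θ - s|) ^ 2 := by
    have : (n * s - n * θ) ^ 2 = (n * |θ - s|) ^ 2 := by
      rw [mul_pow, sq_abs]; ring
    rw [this]; nlinarith
  calc (1 + n * |θ - s|) ^ g * (1 + (n * s - n * θ) ^ 2)
      ≤ (1 + n * |θ - s|) ^ g * (1 + n * |θ - s|) ^ 2 := by gcongr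
    _ = (1 + n * |θ - s|) ^ (g + 2) := by rw [pow_add]
    _ ≤ _ := pow_le_pow_right₀ (by linarith) hk

/-- Kernel bound against the regularised weight. -/
lemma KW (n : ℕ) (hn : 1 ≤ n) (γ : ℝ) (g k : ℕ) (hg : |γ| ≤ g) (hk : g + 2 ≤ k) {θ : ℝ}
    (h0 : 0 ≤ θ) (h1 : θ ≤ π) :
    ∫⁻ s, ENNReal.ofReal (kr n k θ s * wn n γ s) ∂nu ≤ ENNReal.ofReal (4 * wn n γ θ) := by
  have hw := (wn_pos n hn γ h0 h1).le
  calc ∫⁻ s, ENNReal.ofReal (kr n k θ s * wn n γ s) ∂nu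
      ≤ ∫⁻ s, ENNReal.ofReal (wn n γ θ) *
        ENNReal.ofReal (n * (1 + (n * s - n * θ) ^ 2)⁻¹) ∂nu := by
        refine setLIntegral_mono' measurableSet_Ioo fun s hs => ?_
        rw [← ENNReal.ofReal_mul hw]
        refine ENNReal.ofReal_le_ofReal ?_
        calc kr n k θ s * wn n γ s ≤ kr n k θ s * (wn n γ θ * (1 + n * |θ - s|) ^ g) :=
              mul_le_mul_of_nonneg_left (wn_compare n hn γ g hg h0 h1 hs.1.le hs.2.le)
                (kr_nonneg _ _ _ _)
          _ = wn n γ θ * (kr n k θ s * (1 + n * |θ - s|) ^ g) := by ring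
          _ ≤ _ := mul_le_mul_of_nonneg_left (kr_le n k g hk θ s) hw
    _ ≤ ∫⁻ s, ENNReal.ofReal (wn n γ θ) *
        ENNReal.ofReal (n * (1 + (n * s - n * θ) ^ 2)⁻¹) := setLIntegral_le_lintegral _ _
    _ = ENNReal.ofReal (wn n γ θ) * ENNReal.ofReal π := by
        rw [lintegral_const_mul', lint_poisson n hn]; exact ENNReal.ofReal_ne_top
    _ ≤ _ := by
        rw [← ENNReal.ofReal_mul hw]
        refine ENNReal.ofReal_le_ofReal ?_
        nlinarith [Real.pi_lt_d2]

lemma kr_mass (n : ℕ) (hn : 1 ≤ n) (k : ℕ) (hk : 2 ≤ k) {θ : ℝ}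
    (h0 : 0 ≤ θ) (h1 : θ ≤ π) :
    ∫⁻ s, ENNReal.ofReal (kr n k θ s) ∂nu ≤ ENNReal.ofReal 4 := by
  simpa [wn] using KW n hn 0 0 k (by simp) (by omega) h0 h1

/-- Bump function for the singular part. -/
def phi (n : ℕ) (g : ℝ) (θ : ℝ) : ℝ≥0∞ :=
  (Ioc (0 : ℝ) (2 / n)).indicator (fun θ => ENNReal.ofReal ((θ / 2) ^ (-g))) θ

lemma phi_meas (n : ℕ) (g : ℝ) : Measurable (phi n g) := by
  unfold phi
  exact Measurable.indicator (by fun_prop) measurableSet_Ioc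

lemma phi_int (n : ℕ) (hn : 1 ≤ n) (g : ℝ) (hg : g < 1) :
    ∫⁻ θ, phi n g θ = ENNReal.ofReal (2 / (1 - g) * (1 / n) ^ (1 - g)) := by
  have hn' : (0 : ℝ) < n := by exact_mod_cast hn
  unfold phi
  rw [lintegral_indicator measurableSet_Ioc]
  have hIntg : IntervalIntegrable (fun θ : ℝ => (θ / 2) ^ (-g)) volume 0 (2 / n) := by
    have := (intervalIntegral.intervalIntegrable_rpow' (a := 0) (b := 1 / n) (r := -g)
      (by linarith)).comp_mul_right (c := 1 / 2)
    rw [zero_div, show (1 : ℝ) / n / (1 / 2) = 2 / n by ring] at this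
    simpa only [div_eq_mul_inv, one_mul] using this
  rw [← ofReal_integral_eq_lintegral_ofReal]
  · rw [← intervalIntegral.integral_of_le (by positivity)]
    rw [intervalIntegral.integral_comp_div (fun x => x ^ (-g)) (by norm_num : (2 : ℝ) ≠ 0),
      integral_rpow (Or.inl (by linarith))]
    rw [show -g + 1 = 1 - g by ring, zero_div, Real.zero_rpow (by linarith : 1 - g ≠ 0),
      show (2 : ℝ) / n / 2 = 1 / n by field_simp]
    congr 1
    simp only [smul_eq_mul]; ring
  · exact (intervalIntegrable_iff_integrableOn_Ioc_of_le (by positivity)).1 hIntg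
  · refine (ae_restrict_mem measurableSet_Ioc).mono fun θ hθ => ?_
    have := hθ.1
    positivity

lemma sing_le (n : ℕ) (hn : 1 ≤ n) (g : ℝ) (hg : 0 ≤ g) {θ : ℝ} (hθ : θ ∈ Ioo 0 π)
    (hs : Real.sin θ < 1 / n) :
    ENNReal.ofReal (Real.sin θ ^ (-g)) ≤ phi n g θ + phi n g (π - θ) := by
  have hpi := Real.pi_pos
  have hpi4 : π < 4 := by linarith [Real.pi_lt_d2]
  have h2π : 1 / 2 ≤ 2 / π := by rw [div_le_div_iff₀ (by norm_num) hpi]; linarith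
  have key : ∀ x : ℝ, 0 < x → x ≤ π / 2 → Real.sin x < 1 / n →
      ENNReal.ofReal (Real.sin x ^ (-g)) ≤ phi n g x := by
    intro x hx hx' hsx
    have h1 : x / 2 ≤ Real.sin x := by
      have := Real.mul_le_sin hx.le hx'
      have : 1 / 2 * x ≤ 2 / π * x := by gcongr
      linarith
    have h2 : x ∈ Ioc (0 : ℝ) (2 / n) := by
      refine ⟨hx, ?_⟩
      have : (2 : ℝ) / n = 2 * (1 / n) := by ring
      rw [this]; linarith
    rw [phi, Set.indicator_of_mem h2]
    exact ENNReal.ofReal_le_ofReal (Real.rpow_le_rpow_of_nonpos (by positivity) h1 (by linarith))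
  rcases le_total θ (π / 2) with h | h
  · exact (key θ hθ.1 h hs).trans le_self_add
  · have := key (π - θ) (by linarith [hθ.2]) (by linarith) (by rwa [Real.sin_pi_sub])
    rw [Real.sin_pi_sub] at this
    exact this.trans le_add_self

/-- Kernel bound against the original weight. -/
lemma KW2 (γ : ℝ) (hγ : -1 < γ) (g k : ℕ) (hg : |γ| ≤ g) (hk : g + 2 ≤ k) :
    ∃ C : ℝ, 0 < C ∧ ∀ n : ℕ, 1 ≤ n → ∀ s ∈ Ioo (0 : ℝ) π,
    ∫⁻ θ, ENNReal.ofReal (kr n k θ s * Real.sin θ ^ γ) ∂nu ≤ ENNReal.ofReal (C * wn n γ s) := by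
  rcases le_or_gt 0 γ with h | h
  · refine ⟨4, by norm_num, fun n hn s hs => ?_⟩
    refine le_trans ?_ (KW n hn γ g k hg hk hs.1.le hs.2.le)
    refine setLIntegral_mono' measurableSet_Ioo fun θ hθ => ?_
    rw [kr_symm n k s θ]
    refine ENNReal.ofReal_le_ofReal (mul_le_mul_of_nonneg_left ?_ (kr_nonneg _ _ _ _))
    refine Real.rpow_le_rpow (Real.sin_nonneg_of_nonneg_of_le_pi hθ.1.le hθ.2.le) ?_ h
    have : (0 : ℝ) ≤ 1 / n := by positivity
    linarith
  · have h1g : 0 < 1 + γ := by linarith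
    refine ⟨2 * 4 + 2 * (2 * (2 / (1 + γ))), by positivity, fun n hn s hs => ?_⟩
    have hn' : (0 : ℝ) < n := by exact_mod_cast hn
    have hws := (wn_pos n hn γ hs.1.le hs.2.le)
    have hpt : ∀ θ ∈ Ioo (0 : ℝ) π, ENNReal.ofReal (kr n k θ s * Real.sin θ ^ γ) ≤
        ENNReal.ofReal 2 * ENNReal.ofReal (kr n k s θ * wn n γ θ) +
        ENNReal.ofReal (2 * wn n γ s * (n : ℝ) ^ (1 + γ)) * (phi n (-γ) θ + phi n (-γ) (π - θ)) := by
      intro θ hθ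
      have hsin := Real.sin_pos_of_pos_of_lt_pi hθ.1 hθ.2
      have hwt := (wn_pos n hn γ hθ.1.le hθ.2.le)
      have h2g : (2 : ℝ) ^ (-γ) ≤ 2 := by
        calc (2 : ℝ) ^ (-γ) ≤ 2 ^ (1 : ℝ) :=
              Real.rpow_le_rpow_of_exponent_le (by norm_num) (by linarith)
          _ = 2 := by simp
      rcases le_or_gt (1 / (n : ℝ)) (Real.sin θ) with hc | hc
      · refine le_trans ?_ le_self_add
        rw [← ENNReal.ofReal_mul (by norm_num)]
        refine ENNReal.ofReal_le_ofReal ?_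
        rw [kr_symm n k s θ]
        have : Real.sin θ ^ γ ≤ 2 * wn n γ θ := by
          have h1 : (Real.sin θ + 1 / n) / 2 ≤ Real.sin θ := by linarith
          have hb := base_pos n hn hθ.1.le hθ.2.le
          refine (Real.rpow_le_rpow_of_nonpos (by positivity) h1 h.le).trans ?_
          rw [Real.div_rpow hb.le (by norm_num), div_eq_mul_inv, ← Real.rpow_neg (by norm_num),
            mul_comm]
          exact mul_le_mul_of_nonneg_right h2g hwt.le
        nlinarith [kr_nonneg n k θ s]
      · refine le_trans ?_ le_add_self
        have hsing := sing_le n hn (-γ) (by linarith) hθ hc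
        rw [neg_neg] at hsing
        refine le_trans ?_ (mul_le_mul_right hsing _)
        rw [← ENNReal.ofReal_mul (by positivity)]
        refine ENNReal.ofReal_le_ofReal (mul_le_mul_of_nonneg_right ?_ (by positivity))
        have hcmp := wn_compare n hn γ g hg hs.1.le hs.2.le hθ.1.le hθ.2.le
        have hlow : (2 / (n : ℝ)) ^ γ ≤ wn n γ θ := by
          refine Real.rpow_le_rpow_of_nonpos (base_pos n hn hθ.1.le hθ.2.le) ?_ h.le
          have : (2 : ℝ) / n = 2 * (1 / n) := by ring
          rw [this]; linarith
        have d := kr_den n (θ - s)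
        have d1 : 1 ≤ 1 + (n : ℝ) * |θ - s| := by
          have : 0 ≤ (n : ℝ) * |θ - s| := by positivity
          linarith
        rw [abs_sub_comm] at hcmp
        have hpk : (1 + (n : ℝ) * |θ - s|) ^ g ≤ (1 + n * |θ - s|) ^ k :=
          pow_le_pow_right₀ d1 (by omega)
        have h3 : (2 / (n : ℝ)) ^ γ ≤ wn n γ s * (1 + n * |θ - s|) ^ k :=
          (hlow.trans hcmp).trans (mul_le_mul_of_nonneg_left hpk hws.le)
        unfold kr
        rw [div_le_iff₀ (by positivity)]
        rw [Real.div_rpow (by norm_num) hn'.le] at h3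
        have h4 : (n : ℝ) ^ (1 + γ) = n * (n : ℝ) ^ γ := by
          rw [Real.rpow_add hn', Real.rpow_one]
        have h5 : (1 : ℝ) ≤ 2 * 2 ^ γ := by
          have : (2 : ℝ) ^ (-γ) * 2 ^ γ = 1 := by
            rw [← Real.rpow_add (by norm_num)]; simp
          have h2γ : (0 : ℝ) < 2 ^ γ := by positivity
          nlinarith
        have hnγ : (0 : ℝ) < (n : ℝ) ^ γ := by positivity
        rw [div_le_iff₀ hnγ] at h3
        rw [h4]
        calc (n : ℝ) = n * 1 := by ring
          _ ≤ n * (2 * 2 ^ γ) := by gcongr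
          _ ≤ n * (2 * (wn n γ s * (1 + n * |θ - s|) ^ k * (n : ℝ) ^ γ)) := by gcongr
          _ = _ := by ring
    calc ∫⁻ θ, ENNReal.ofReal (kr n k θ s * Real.sin θ ^ γ) ∂nu
        ≤ ∫⁻ θ, (ENNReal.ofReal 2 * ENNReal.ofReal (kr n k s θ * wn n γ θ) +
        ENNReal.ofReal (2 * wn n γ s * (n : ℝ) ^ (1 + γ)) *
          (phi n (-γ) θ + phi n (-γ) (π - θ))) ∂nu :=
          setLIntegral_mono' measurableSet_Ioo hpt
      _ = ENNReal.ofReal 2 * (∫⁻ θ, ENNReal.ofReal (kr n k s θ * wn n γ θ) ∂nu) +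
          ENNReal.ofReal (2 * wn n γ s * (n : ℝ) ^ (1 + γ)) *
          ∫⁻ θ, (phi n (-γ) θ + phi n (-γ) (π - θ)) ∂nu := by
          rw [lintegral_add_right, lintegral_const_mul' _ _ ENNReal.ofReal_ne_top,
            lintegral_const_mul' _ _ ENNReal.ofReal_ne_top]
          have := phi_meas n (-γ)
          fun_prop
      _ ≤ ENNReal.ofReal 2 * ENNReal.ofReal (4 * wn n γ s) +
          ENNReal.ofReal (2 * wn n γ s * (n : ℝ) ^ (1 + γ)) *
          (ENNReal.ofReal (2 / (1 + γ) * (1 / n) ^ (1 + γ)) +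
            ENNReal.ofReal (2 / (1 + γ) * (1 / n) ^ (1 + γ))) := by
          refine add_le_add (mul_le_mul_right (KW n hn γ g k hg hk hs.1.le hs.2.le) _)
            (mul_le_mul_right ?_ _)
          refine (setLIntegral_le_lintegral _ _).trans ?_
          rw [lintegral_add_left (phi_meas n (-γ)),
            lintegral_sub_left_eq_self (fun θ => phi n (-γ) θ) π, phi_int n hn (-γ) (by linarith),
            sub_neg_eq_add]
      _ = _ := by
          have h6 : (n : ℝ) ^ (1 + γ) * (1 / n) ^ (1 + γ) = 1 := by
            rw [← Real.mul_rpow hn'.le (by positivity)]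
            rw [mul_one_div_cancel hn'.ne', Real.one_rpow]
          rw [← ENNReal.ofReal_add (by positivity) (by positivity),
            ← ENNReal.ofReal_mul (by positivity), ← ENNReal.ofReal_mul (by positivity),
            ← ENNReal.ofReal_add (by positivity) (by positivity)]
          congr 1
          linear_combination (2 * wn n γ s * (2 / (1 + γ)) * 2) * h6

end DPB

namespace DPB

lemma Gr_lint (n k : ℕ) (q : Polynomial ℝ) (θ : ℝ) :
    ENNReal.ofReal (Gr n k q θ) =
      ∫⁻ s, ENNReal.ofReal (kr n k θ s) * ENNReal.ofReal (|q.eval (Real.cos s)|) ∂nu := by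
  unfold Gr
  rw [intervalIntegral.integral_of_le Real.pi_pos.le, integral_Ioc_eq_integral_Ioo,
    ofReal_integral_eq_lintegral_ofReal]
  · refine lintegral_congr fun s => ?_
    rw [mul_comm, ENNReal.ofReal_mul (kr_nonneg _ _ _ _)]
  · exact ((Gr_integrand_cont n k q θ).integrableOn_Icc (a := 0) (b := π)).mono_set
      Ioo_subset_Icc_self
  · exact Filter.Eventually.of_forall fun s => mul_nonneg (abs_nonneg _) (kr_nonneg _ _ _ _)

lemma T_meas (q : Polynomial ℝ) : Measurable fun s : ℝ => q.eval (Real.cos s) :=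
  (q.continuous.comp Real.continuous_cos).measurable

lemma jensen (n k : ℕ) (hn : 1 ≤ n) (hk : 2 ≤ k) (q : Polynomial ℝ) (p : ℝ) (hp : 1 ≤ p) {θ : ℝ}
    (h0 : 0 ≤ θ) (h1 : θ ≤ π) :
    ENNReal.ofReal (Gr n k q θ) ^ p ≤ ENNReal.ofReal (4 ^ p) *
      ∫⁻ s, ENNReal.ofReal (kr n k θ s) * ENNReal.ofReal (|q.eval (Real.cos s)| ^ p) ∂nu := by
  have hkm : Measurable fun s => ENNReal.ofReal (kr n k θ s) :=
    (kr_cont_right n k θ).measurable.ennreal_ofReal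
  have hTm := T_meas q
  set κ := nu.withDensity (fun s => ENNReal.ofReal (kr n k θ s)) with hκ
  have p0 : 0 < p := by linarith
  have hmass : κ univ ≤ ENNReal.ofReal 4 := by
    rw [hκ, withDensity_apply _ MeasurableSet.univ, Measure.restrict_univ]
    exact kr_mass n hn k hk h0 h1
  have hmain := eLpNorm_le_eLpNorm_mul_rpow_measure_univ (μ := κ) (p := 1) (q := ENNReal.ofReal p)
    (f := fun s => q.eval (Real.cos s)) (by simpa using hp) hTm.aestronglyMeasurable
  have e1 : eLpNorm (fun s => q.eval (Real.cos s)) 1 κ = ENNReal.ofReal (Gr n k q θ) := by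
    rw [eLpNorm_one_eq_lintegral_enorm, Gr_lint, hκ, lintegral_withDensity_eq_lintegral_mul _ hkm
      (by fun_prop)]
    refine lintegral_congr fun s => ?_
    simp [Real.enorm_eq_ofReal_abs]
  have e2 : eLpNorm (fun s => q.eval (Real.cos s)) (ENNReal.ofReal p) κ ^ p =
      ∫⁻ s, ENNReal.ofReal (kr n k θ s) * ENNReal.ofReal (|q.eval (Real.cos s)| ^ p) ∂nu := by
    rw [eLpNorm_eq_lintegral_rpow_enorm_toReal (by simpa using p0) (by simp),
      ENNReal.toReal_ofReal p0.le, ← ENNReal.rpow_mul, one_div, inv_mul_cancel₀ p0.ne',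
      ENNReal.rpow_one, hκ, lintegral_withDensity_eq_lintegral_mul _ hkm (by fun_prop)]
    refine lintegral_congr fun s => ?_
    simp only [Pi.mul_apply, Real.enorm_eq_ofReal_abs]
    rw [ENNReal.ofReal_rpow_of_nonneg (abs_nonneg _) p0.le]
  rw [e1] at hmain
  refine (ENNReal.rpow_le_rpow hmain p0.le).trans ?_
  rw [ENNReal.mul_rpow_of_nonneg _ _ p0.le, e2, mul_comm]
  refine mul_le_mul_left ?_ _
  rw [← ENNReal.rpow_mul, ENNReal.toReal_ofReal p0.le]
  have hex : (1 / ENNReal.toReal 1 - 1 / p) * p = p - 1 := by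
    simp; field_simp
  rw [hex]
  calc κ univ ^ (p - 1) ≤ ENNReal.ofReal 4 ^ (p - 1) := ENNReal.rpow_le_rpow hmass (by linarith)
    _ ≤ ENNReal.ofReal 4 ^ p := ENNReal.rpow_le_rpow_of_exponent_le (by simp) (by linarith)
    _ = _ := ENNReal.ofReal_rpow_of_nonneg (by norm_num) p0.le

lemma tonelli (n k : ℕ) (hn : 1 ≤ n) (hk : 2 ≤ k) (q : Polynomial ℝ) (p : ℝ) (hp : 1 ≤ p)
    (u W : ℝ → ℝ) (hu : Measurable u) (hu0 : ∀ θ ∈ Ioo 0 π, 0 ≤ u θ) (Cu : ℝ) (hC : 0 ≤ Cu)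
    (h : ∀ s ∈ Ioo (0 : ℝ) π, ∫⁻ θ, ENNReal.ofReal (kr n k θ s * u θ) ∂nu ≤
      ENNReal.ofReal (Cu * W s)) :
    ∫⁻ θ, ENNReal.ofReal (Gr n k q θ) ^ p * ENNReal.ofReal (u θ) ∂nu ≤
      ENNReal.ofReal (4 ^ p * Cu) *
        ∫⁻ s, ENNReal.ofReal (|q.eval (Real.cos s)| ^ p) * ENNReal.ofReal (W s) ∂nu := by
  have hTm := T_meas q
  have hkm : Measurable (fun z : ℝ × ℝ => kr n k z.1 z.2) := (kr_cont n k).measurable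
  calc ∫⁻ θ, ENNReal.ofReal (Gr n k q θ) ^ p * ENNReal.ofReal (u θ) ∂nu
      ≤ ∫⁻ θ, ENNReal.ofReal (4 ^ p) * ∫⁻ s, ENNReal.ofReal (kr n k θ s * u θ) *
          ENNReal.ofReal (|q.eval (Real.cos s)| ^ p) ∂nu ∂nu := by
        refine setLIntegral_mono' measurableSet_Ioo fun θ hθ => ?_
        refine (mul_le_mul_left (jensen n k hn hk q p hp hθ.1.le hθ.2.le) _).trans ?_
        rw [mul_assoc]
        refine mul_le_mul_right ?_ _
        rw [← lintegral_mul_const' _ _ ENNReal.ofReal_ne_top]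
        refine lintegral_mono fun s => ?_
        simp only
        rw [ENNReal.ofReal_mul (kr_nonneg _ _ _ _)]
        exact le_of_eq (by ring)
    _ = ENNReal.ofReal (4 ^ p) * ∫⁻ s, ∫⁻ θ, ENNReal.ofReal (kr n k θ s * u θ) *
          ENNReal.ofReal (|q.eval (Real.cos s)| ^ p) ∂nu ∂nu := by
        rw [lintegral_const_mul' _ _ ENNReal.ofReal_ne_top]
        congr 1
        unfold nu
        rw [lintegral_lintegral_swap]
        refine Measurable.aemeasurable ?_
        have h1 : Measurable (fun z : ℝ × ℝ => u z.1) := hu.comp measurable_fst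
        have h2 : Measurable (fun z : ℝ × ℝ => q.eval (Real.cos z.2)) := hTm.comp measurable_snd
        exact ((hkm.mul h1).ennreal_ofReal).mul
          ((h2.norm.pow_const p).ennreal_ofReal)
    _ ≤ ENNReal.ofReal (4 ^ p) * ∫⁻ s, ENNReal.ofReal Cu *
          (ENNReal.ofReal (|q.eval (Real.cos s)| ^ p) * ENNReal.ofReal (W s)) ∂nu := by
        refine mul_le_mul_right ?_ _
        refine setLIntegral_mono' measurableSet_Ioo fun s hs => ?_
        rw [lintegral_mul_const' _ _ ENNReal.ofReal_ne_top]
        refine (mul_le_mul_left (h s hs) _).trans ?_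
        rw [ENNReal.ofReal_mul hC]
        exact le_of_eq (by ring)
    _ = _ := by
        rw [lintegral_const_mul' _ _ ENNReal.ofReal_ne_top, ← mul_assoc,
          ← ENNReal.ofReal_mul (by positivity)]

/-- Affine contraction of `(0, π)`. -/
def sg (n : ℕ) (δ θ : ℝ) : ℝ := π / 2 + (1 - δ / (2 * n)) * (θ - π / 2)

lemma eps_bd (n : ℕ) (hn : 1 ≤ n) {δ : ℝ} (hδ : 0 < δ) (hδ1 : δ ≤ 1) :
    0 < δ / (2 * n) ∧ δ / (2 * n) ≤ 1 / 2 := by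
  have hn' : (1 : ℝ) ≤ n := by exact_mod_cast hn
  refine ⟨by positivity, ?_⟩
  rw [div_le_div_iff₀ (by positivity) (by norm_num)]; nlinarith

lemma sg_props (n : ℕ) (hn : 1 ≤ n) {δ : ℝ} (hδ : 0 < δ) (hδ1 : δ ≤ 1) {θ : ℝ}
    (h0 : 0 ≤ θ) (h1 : θ ≤ π) :
    |θ - sg n δ θ| ≤ δ / n ∧ 0 < sg n δ θ ∧ sg n δ θ < π ∧
      1 / n ≤ 2 / δ * Real.sin (sg n δ θ) := by
  have hn' : (1 : ℝ) ≤ n := by exact_mod_cast hn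
  obtain ⟨e0, e1⟩ := eps_bd n hn hδ hδ1
  have hpi := Real.pi_pos
  have hpi4 : π < 4 := by linarith [Real.pi_lt_d2]
  set ε := δ / (2 * n) with hε
  have hεn : δ / n = 2 * ε := by rw [hε]; field_simp
  have hσ : sg n δ θ = π / 2 + (1 - ε) * (θ - π / 2) := rfl
  have lo : ε * (π / 2) ≤ sg n δ θ := by rw [hσ]; nlinarith
  have hi : sg n δ θ ≤ π - ε * (π / 2) := by rw [hσ]; nlinarith
  have hp : 0 < ε * (π / 2) := by positivity
  refine ⟨?_, by linarith, by linarith, ?_⟩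
  · have : θ - sg n δ θ = ε * (θ - π / 2) := by rw [hσ]; ring
    rw [this, hεn, abs_mul, abs_of_pos e0]
    have : |θ - π / 2| ≤ 2 := by rw [abs_le]; constructor <;> linarith
    nlinarith
  · have hs : ε ≤ Real.sin (sg n δ θ) := by
      have hkey : 2 / π * (ε * (π / 2)) = ε := by field_simp
      rcases le_total (sg n δ θ) (π / 2) with h | h
      · have := Real.mul_le_sin (x := sg n δ θ) (by linarith) h
        refine le_trans ?_ this
        rw [← hkey]; gcongr
      · have := Real.mul_le_sin (x := π - sg n δ θ) (by linarith) (by linarith)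
        rw [Real.sin_pi_sub] at this
        refine le_trans ?_ this
        rw [← hkey]; gcongr; linarith
    calc 1 / (n : ℝ) = 2 / δ * ε := by rw [hε]; field_simp
      _ ≤ _ := by gcongr

lemma wn_sg (n : ℕ) (hn : 1 ≤ n) {δ : ℝ} (hδ : 0 < δ) (hδ1 : δ ≤ 1) {θ γ : ℝ} (hγ : 0 ≤ γ)
    (h0 : 0 ≤ θ) (h1 : θ ≤ π) :
    wn n γ θ ≤ (2 * (1 + 2 / δ)) ^ γ * Real.sin (sg n δ θ) ^ γ := by
  have hn' : (1 : ℝ) ≤ n := by exact_mod_cast hn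
  obtain ⟨a, b, c, d⟩ := sg_props n hn hδ hδ1 h0 h1
  have hs := (Real.sin_pos_of_pos_of_lt_pi b c).le
  rw [← Real.mul_rpow (by positivity) hs]
  refine Real.rpow_le_rpow (base_pos n hn h0 h1).le ?_ hγ
  refine (base_compare n hn (θ := sg n δ θ) (s := θ) b.le c.le).trans ?_
  rw [abs_sub_comm]
  have h2 : n * |θ - sg n δ θ| ≤ 1 := by
    calc n * |θ - sg n δ θ| ≤ n * (δ / n) := by gcongr
      _ = δ := by field_simp
      _ ≤ 1 := hδ1
  have h3 : 0 < Real.sin (sg n δ θ) + 1 / n := base_pos n hn b.le c.le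
  nlinarith

lemma sg_change (n : ℕ) (hn : 1 ≤ n) {δ : ℝ} (hδ : 0 < δ) (hδ1 : δ ≤ 1) (H : ℝ → ℝ≥0∞) :
    ∫⁻ θ, H (sg n δ θ) ∂nu ≤ 2 * ∫⁻ θ, H θ ∂nu := by
  obtain ⟨e0, e1⟩ := eps_bd n hn hδ hδ1
  have hd : ∀ x ∈ Ioo (0 : ℝ) π, HasDerivWithinAt (sg n δ) (1 - δ / (2 * n)) (Ioo 0 π) x := by
    intro x _
    have : HasDerivAt (sg n δ) ((1 - δ / (2 * n)) * 1) x :=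
      (((hasDerivAt_id x).sub_const _).const_mul _).const_add _
    rw [mul_one] at this
    exact this.hasDerivWithinAt
  have hinj : InjOn (sg n δ) (Ioo 0 π) := by
    intro x _ y _ hxy
    unfold sg at hxy
    have h1 : (1 - δ / (2 * n)) * (x - y) = 0 := by linarith
    rcases mul_eq_zero.1 h1 with h | h <;> linarith
  have hcv := lintegral_image_eq_lintegral_abs_deriv_mul measurableSet_Ioo hd hinj H
  have hsub : Set.image (sg n δ) (Ioo 0 π) ⊆ Ioo 0 π := by
    rintro _ ⟨x, hx, rfl⟩
    obtain ⟨-, b, c, -⟩ := sg_props n hn hδ hδ1 hx.1.le hx.2.le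
    exact ⟨b, c⟩
  have h1 : ∫⁻ θ in Ioo 0 π, ENNReal.ofReal |1 - δ / (2 * n)| * H (sg n δ θ) ≤
      ∫⁻ θ, H θ ∂nu := by
    rw [← hcv]; exact lintegral_mono_set hsub
  rw [lintegral_const_mul' _ _ ENNReal.ofReal_ne_top] at h1
  have h2 : (1 : ℝ≥0∞) ≤ 2 * ENNReal.ofReal |1 - δ / (2 * n)| := by
    rw [abs_of_pos (by linarith), show (2 : ℝ≥0∞) = ENNReal.ofReal 2 by simp,
      ← ENNReal.ofReal_mul (by norm_num), ENNReal.one_le_ofReal]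
    linarith
  calc ∫⁻ θ, H (sg n δ θ) ∂nu = 1 * ∫⁻ θ, H (sg n δ θ) ∂nu := by rw [one_mul]
    _ ≤ (2 * ENNReal.ofReal |1 - δ / (2 * n)|) * ∫⁻ θ, H (sg n δ θ) ∂nu := mul_le_mul_left h2 _
    _ = 2 * (ENNReal.ofReal |1 - δ / (2 * n)| * ∫⁻ θ, H (sg n δ θ) ∂nu) := by ring
    _ ≤ _ := mul_le_mul_right h1 _

/-- The choice of the small parameter. -/
def dl (k : ℕ) : ℝ := 1 / (64 * (c0 k * 2 ^ k))

lemma dl_props (k : ℕ) : 0 < dl k ∧ dl k ≤ 1 ∧ c0 k * 2 ^ k * dl k = 1 / 64 := by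
  have hc := c0_pos k
  have hc1 : 1 ≤ c0 k := by
    unfold c0
    have h1 : (1 : ℝ) ≤ 5 ^ k := one_le_pow₀ (by norm_num)
    have h2 : (1 : ℝ) ≤ (k + 3) ^ 3 := one_le_pow₀ (by linarith [(by positivity : (0 : ℝ) ≤ k)])
    nlinarith
  have h2k : (1 : ℝ) ≤ 2 ^ k := one_le_pow₀ (by norm_num)
  refine ⟨by unfold dl; positivity, ?_, by unfold dl; field_simp⟩
  unfold dl
  rw [div_le_one (by positivity)]
  nlinarith

/-- Pass from the regularised weight to the original one. -/
lemma absorb (γ p : ℝ) (hp : 1 ≤ p) (g k : ℕ) (hg : |γ| ≤ g) (hk : g + 2 ≤ k) :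
    ∃ C : ℝ, 0 < C ∧ ∀ n : ℕ, 1 ≤ n → ∀ q : Polynomial ℝ, q.natDegree ≤ n →
    ∫⁻ s, ENNReal.ofReal (|q.eval (Real.cos s)| ^ p) * ENNReal.ofReal (wn n γ s) ∂nu ≤
    ENNReal.ofReal C *
      ∫⁻ s, ENNReal.ofReal (|q.eval (Real.cos s)| ^ p) * ENNReal.ofReal (Real.sin s ^ γ) ∂nu := by
  have p0 : 0 < p := by linarith
  rcases le_or_gt γ 0 with h | h
  · refine ⟨1, one_pos, fun n hn q hq => ?_⟩
    rw [ENNReal.ofReal_one, one_mul]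
    refine setLIntegral_mono' measurableSet_Ioo fun s hs => ?_
    refine mul_le_mul_right (ENNReal.ofReal_le_ofReal ?_) _
    refine Real.rpow_le_rpow_of_nonpos (Real.sin_pos_of_pos_of_lt_pi hs.1 hs.2) ?_ h
    have : (0 : ℝ) ≤ 1 / n := by positivity
    linarith
  · obtain ⟨d0, d1, d2⟩ := dl_props k
    set δ := dl k with hδ
    set A : ℝ := (2 * (1 + 2 / δ)) ^ γ with hA
    have hA0 : 0 < A := by positivity
    refine ⟨2 * (2 ^ p * A * 2), by positivity, fun n hn q hq => ?_⟩
    set X := ∫⁻ s, ENNReal.ofReal (|q.eval (Real.cos s)| ^ p) * ENNReal.ofReal (wn n γ s) ∂nu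
      with hX
    set Y := ∫⁻ s, ENNReal.ofReal (|q.eval (Real.cos s)| ^ p) *
      ENNReal.ofReal (Real.sin s ^ γ) ∂nu with hY
    have hTc : Continuous fun s : ℝ => q.eval (Real.cos s) := q.continuous.comp Real.continuous_cos
    have hn' : (0 : ℝ) < n := by exact_mod_cast hn
    have hwm : Measurable (wn n γ) := by
      unfold wn; fun_prop
    have hXfin : X ≠ ⊤ := by
      have hcont : ContinuousOn (fun s => |q.eval (Real.cos s)| ^ p * wn n γ s) (Icc 0 π) := by
        refine ContinuousOn.mul ?_ ?_
        · exact (hTc.abs.rpow_const fun _ => Or.inr p0.le).continuousOn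
        · unfold wn
          exact ((by fun_prop : Continuous fun s : ℝ => Real.sin s + 1 / (n : ℝ)).rpow_const
            fun _ => Or.inr h.le).continuousOn
      have hIntg := (hcont.integrableOn_Icc (μ := volume)).mono_set Ioo_subset_Icc_self
      have := hIntg.lintegral_lt_top
      refine ne_of_lt (lt_of_le_of_lt (le_of_eq ?_) this)
      refine lintegral_congr fun s => ?_
      rw [ENNReal.ofReal_mul (by positivity)]
    have hpt : ∀ θ ∈ Ioo (0 : ℝ) π,
        ENNReal.ofReal (|q.eval (Real.cos θ)| ^ p) * ENNReal.ofReal (wn n γ θ) ≤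
        ENNReal.ofReal (2 ^ p * A) * (ENNReal.ofReal (|q.eval (Real.cos (sg n δ θ))| ^ p) *
          ENNReal.ofReal (Real.sin (sg n δ θ) ^ γ)) +
        ENNReal.ofReal ((1 / 32) ^ p) *
          (ENNReal.ofReal (Gr n k q θ) ^ p * ENNReal.ofReal (wn n γ θ)) := by
      intro θ hθ
      obtain ⟨a, b, c, d⟩ := sg_props n hn d0 d1 hθ.1.le hθ.2.le
      have hsn := (Real.sin_pos_of_pos_of_lt_pi b c).le
      have hdiff := pointwise_diff k n hn q hq θ (sg n δ θ) δ d1 a hθ.1.le hθ.2.le b.le c.le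
      rw [d2] at hdiff
      have hG := Gr_nonneg n k q θ
      have hw := (wn_pos n hn γ hθ.1.le hθ.2.le).le
      have hw2 := wn_sg n hn d0 d1 h.le hθ.1.le hθ.2.le
      have hpow : |q.eval (Real.cos θ)| ^ p ≤ 2 ^ p * |q.eval (Real.cos (sg n δ θ))| ^ p +
          (1 / 32) ^ p * Gr n k q θ ^ p := by
        rw [← Real.mul_rpow (by norm_num) (abs_nonneg _), ← Real.mul_rpow (by norm_num) hG]
        have hmax : |q.eval (Real.cos θ)| ≤
            max (2 * |q.eval (Real.cos (sg n δ θ))|) (1 / 32 * Gr n k q θ) := by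
          rcases le_total (2 * |q.eval (Real.cos (sg n δ θ))|) (1 / 32 * Gr n k q θ) with h | h
          · rw [max_eq_right h]; linarith
          · rw [max_eq_left h]; linarith
        refine (Real.rpow_le_rpow (abs_nonneg _) hmax p0.le).trans ?_
        rcases le_total (2 * |q.eval (Real.cos (sg n δ θ))|) (1 / 32 * Gr n k q θ) with h | h
        · rw [max_eq_right h]
          exact le_add_of_nonneg_left (by positivity)
        · rw [max_eq_left h]
          exact le_add_of_nonneg_right (by positivity)
      rw [ENNReal.ofReal_rpow_of_nonneg hG p0.le, ← ENNReal.ofReal_mul (by positivity),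
        ← ENNReal.ofReal_mul (by positivity), ← ENNReal.ofReal_mul (by positivity),
        ← ENNReal.ofReal_mul (by positivity), ← ENNReal.ofReal_mul (by positivity),
        ← ENNReal.ofReal_add (by positivity) (by positivity)]
      refine ENNReal.ofReal_le_ofReal ?_
      calc |q.eval (Real.cos θ)| ^ p * wn n γ θ
          ≤ (2 ^ p * |q.eval (Real.cos (sg n δ θ))| ^ p +
            (1 / 32) ^ p * Gr n k q θ ^ p) * wn n γ θ := by gcongr
        _ = 2 ^ p * |q.eval (Real.cos (sg n δ θ))| ^ p * wn n γ θ +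
            (1 / 32) ^ p * (Gr n k q θ ^ p * wn n γ θ) := by ring
        _ ≤ 2 ^ p * |q.eval (Real.cos (sg n δ θ))| ^ p * (A * Real.sin (sg n δ θ) ^ γ) +
            (1 / 32) ^ p * (Gr n k q θ ^ p * wn n γ θ) := by gcongr
        _ = _ := by ring
    have hton := tonelli n k hn (by omega) q p hp (wn n γ) (wn n γ) hwm
      (fun θ hθ => (wn_pos n hn γ hθ.1.le hθ.2.le).le) 4 (by norm_num) (fun s hs => by
        simp_rw [kr_symm n k _ s]
        exact KW n hn γ g k hg hk hs.1.le hs.2.le)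
    rw [← hX] at hton
    have hXle : X ≤ ENNReal.ofReal (2 ^ p * A) * (2 * Y) +
        ENNReal.ofReal ((1 / 32) ^ p) * (ENNReal.ofReal (4 ^ p * 4) * X) := by
      calc X ≤ ∫⁻ θ, (ENNReal.ofReal (2 ^ p * A) *
            (ENNReal.ofReal (|q.eval (Real.cos (sg n δ θ))| ^ p) *
              ENNReal.ofReal (Real.sin (sg n δ θ) ^ γ)) +
          ENNReal.ofReal ((1 / 32) ^ p) *
            (ENNReal.ofReal (Gr n k q θ) ^ p * ENNReal.ofReal (wn n γ θ))) ∂nu :=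
            setLIntegral_mono' measurableSet_Ioo hpt
        _ = ENNReal.ofReal (2 ^ p * A) * (∫⁻ θ, (ENNReal.ofReal (|q.eval (Real.cos (sg n δ θ))| ^ p) *
              ENNReal.ofReal (Real.sin (sg n δ θ) ^ γ)) ∂nu) +
          ENNReal.ofReal ((1 / 32) ^ p) *
            ∫⁻ θ, (ENNReal.ofReal (Gr n k q θ) ^ p * ENNReal.ofReal (wn n γ θ)) ∂nu := by
            rw [lintegral_add_left, lintegral_const_mul' _ _ ENNReal.ofReal_ne_top,
              lintegral_const_mul' _ _ ENNReal.ofReal_ne_top]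
            have hsm : Measurable (sg n δ) := by unfold sg; fun_prop
            have hTm : Measurable fun θ => q.eval (Real.cos (sg n δ θ)) := (T_meas q).comp hsm
            exact ((hTm.norm.pow_const p).ennreal_ofReal.mul
              ((Real.measurable_sin.comp hsm).pow_const γ).ennreal_ofReal).const_mul _
        _ ≤ _ := add_le_add (mul_le_mul_right (sg_change n hn d0 d1 (fun θ =>
              (ENNReal.ofReal (|q.eval (Real.cos θ)| ^ p) *
                ENNReal.ofReal (Real.sin θ ^ γ)))) _) (mul_le_mul_right hton _)
    have hhalf : ENNReal.ofReal ((1 / 32) ^ p) * (ENNReal.ofReal (4 ^ p * 4) * X) ≤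
        ENNReal.ofReal (1 / 2) * X := by
      rw [← mul_assoc, ← ENNReal.ofReal_mul (by positivity)]
      refine mul_le_mul_left (ENNReal.ofReal_le_ofReal ?_) _
      rw [← mul_assoc, ← Real.mul_rpow (by norm_num) (by norm_num)]
      have : ((1 : ℝ) / 32 * 4) ^ p ≤ (1 / 32 * 4) ^ (1 : ℝ) :=
        Real.rpow_le_rpow_of_exponent_ge (by norm_num) (by norm_num) hp
      rw [Real.rpow_one] at this
      linarith
    have hfin := hXle.trans (add_le_add_right hhalf _)
    by_cases hYt : Y = ⊤
    · rw [hYt, ENNReal.mul_top]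
      · exact le_top
      · simp only [ne_eq, ENNReal.ofReal_eq_zero, not_le]; positivity
    have hXr := ENNReal.ofReal_toReal hXfin
    have hYr := ENNReal.ofReal_toReal hYt
    rw [← hXr, ← hYr] at hfin ⊢
    have hx0 : 0 ≤ X.toReal := ENNReal.toReal_nonneg
    have hy0 : 0 ≤ Y.toReal := ENNReal.toReal_nonneg
    rw [show (2 : ℝ≥0∞) = ENNReal.ofReal 2 by simp, ← ENNReal.ofReal_mul (by positivity),
      ← ENNReal.ofReal_mul (by positivity), ← ENNReal.ofReal_mul (by positivity),
      ← ENNReal.ofReal_add (by positivity) (by positivity),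
      ENNReal.ofReal_le_ofReal_iff (by positivity)] at hfin
    rw [← ENNReal.ofReal_mul (by positivity)]
    refine ENNReal.ofReal_le_ofReal ?_
    linarith

end DPB

namespace DPB

/-- The differential operator applied to a polynomial. -/
def Dq (q : Polynomial ℝ) (x : ℝ) : ℝ :=
  (1 - x ^ 2) * q.derivative.derivative.eval x - 6 * x * q.derivative.eval x

lemma Dop_eq (q : Polynomial ℝ) : Dop (fun x => q.eval x) = Dq q := by
  have h1 : deriv (fun x => q.eval x) = fun x => q.derivative.eval x := by
    ext x; exact Polynomial.deriv q
  have h2 : deriv (fun x => q.derivative.eval x) = fun x => q.derivative.derivative.eval x := by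
    ext x; exact Polynomial.deriv q.derivative
  ext x
  simp only [Dop, h1, h2, Dq]

lemma main_fin (γ p : ℝ) (hp : 1 ≤ p) (hγ : -1 < γ) :
    ∃ C : ℝ, 0 < C ∧ ∀ n : ℕ, 1 ≤ n → ∀ q : Polynomial ℝ, q.natDegree ≤ n →
    ∫⁻ s, ENNReal.ofReal (|Dq q (Real.cos s)| ^ p) * ENNReal.ofReal (Real.sin s ^ γ) ∂nu ≤
    ENNReal.ofReal ((C * n ^ 2) ^ p) *
      ∫⁻ s, ENNReal.ofReal (|q.eval (Real.cos s)| ^ p) * ENNReal.ofReal (Real.sin s ^ γ) ∂nu := by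
  have p0 : 0 < p := by linarith
  obtain ⟨g, hg⟩ := exists_nat_ge |γ|
  set k := g + 2 with hk
  obtain ⟨C1, hC1, H1⟩ := KW2 γ hγ g k hg le_rfl
  obtain ⟨C2, hC2, H2⟩ := absorb γ p hp g k hg le_rfl
  have hc := c0_pos k
  set B : ℝ := 4 ^ p * C1 * C2 with hB
  have hB0 : 0 < B := by positivity
  set c1 : ℝ := 11 * 2 ^ k * c0 k with hc1
  have hc10 : 0 < c1 := by positivity
  refine ⟨c1 * B ^ (1 / p), by positivity, fun n hn q hq => ?_⟩
  have hton := tonelli n k hn (by omega) q p hp (fun θ => Real.sin θ ^ γ) (wn n γ)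
    (Real.measurable_sin.pow_const γ)
    (fun θ hθ => (Real.rpow_pos_of_pos (Real.sin_pos_of_pos_of_lt_pi hθ.1 hθ.2) _).le) C1 hC1.le
    (H1 n hn)
  have hab := H2 n hn q hq
  have hn' : (0 : ℝ) < n := by exact_mod_cast hn
  have hexp : (c1 * B ^ (1 / p) * n ^ 2) ^ p = (c1 * n ^ 2) ^ p * (4 ^ p * C1) * C2 := by
    rw [show c1 * B ^ (1 / p) * (n : ℝ) ^ 2 = (c1 * n ^ 2) * B ^ (1 / p) by ring,
      Real.mul_rpow (by positivity) (by positivity), ← Real.rpow_mul hB0.le, one_div,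
      inv_mul_cancel₀ p0.ne', Real.rpow_one, hB]
    ring
  calc ∫⁻ s, ENNReal.ofReal (|Dq q (Real.cos s)| ^ p) * ENNReal.ofReal (Real.sin s ^ γ) ∂nu
      ≤ ∫⁻ s, ENNReal.ofReal ((c1 * n ^ 2) ^ p) *
        (ENNReal.ofReal (Gr n k q s) ^ p * ENNReal.ofReal (Real.sin s ^ γ)) ∂nu := by
        refine setLIntegral_mono' measurableSet_Ioo fun s hs => ?_
        rw [← mul_assoc]
        refine mul_le_mul_left ?_ _
        have hG := Gr_nonneg n k q s
        rw [ENNReal.ofReal_rpow_of_nonneg hG p0.le, ← ENNReal.ofReal_mul (by positivity),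
          ← Real.mul_rpow (by positivity) hG]
        exact ENNReal.ofReal_le_ofReal (Real.rpow_le_rpow (abs_nonneg _)
          (pointwise_D k n hn q hq s hs.1 hs.2) p0.le)
    _ = ENNReal.ofReal ((c1 * n ^ 2) ^ p) * ∫⁻ s,
        (ENNReal.ofReal (Gr n k q s) ^ p * ENNReal.ofReal (Real.sin s ^ γ)) ∂nu := by
        rw [lintegral_const_mul' _ _ ENNReal.ofReal_ne_top]
    _ ≤ ENNReal.ofReal ((c1 * n ^ 2) ^ p) * (ENNReal.ofReal (4 ^ p * C1) * (ENNReal.ofReal C2 *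
        ∫⁻ s, ENNReal.ofReal (|q.eval (Real.cos s)| ^ p) *
          ENNReal.ofReal (Real.sin s ^ γ) ∂nu)) :=
        mul_le_mul_right (hton.trans (mul_le_mul_right hab _)) _
    _ = _ := by
        rw [hexp, ENNReal.ofReal_mul (p := (c1 * (n : ℝ) ^ 2) ^ p * (4 ^ p * C1)) (by positivity),
          ENNReal.ofReal_mul (p := (c1 * (n : ℝ) ^ 2) ^ p) (q := 4 ^ p * C1) (by positivity)]
        ring

lemma image_cos : Set.image Real.cos (Ioo 0 π) = Ioo (-1) 1 := by
  ext x
  constructor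
  · rintro ⟨θ, hθ, rfl⟩
    have hs := Real.sin_pos_of_pos_of_lt_pi hθ.1 hθ.2
    have := Real.sin_sq_add_cos_sq θ
    constructor <;> nlinarith
  · intro hx
    exact ⟨Real.arccos x, ⟨Real.arccos_pos.2 hx.2, Real.arccos_lt_pi.2 hx.1⟩,
      Real.cos_arccos hx.1.le hx.2.le⟩

lemma weight_eq {θ : ℝ} (hθ : θ ∈ Ioo 0 π) (α : ℝ) :
    (1 - Real.cos θ ^ 2) ^ α = Real.sin θ ^ (2 * α) := by
  have hs := Real.sin_pos_of_pos_of_lt_pi hθ.1 hθ.2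
  rw [← Real.sin_sq, Real.rpow_mul hs.le]
  norm_num

lemma wnorm_fin (p : ℝ≥0∞) (hp : 1 ≤ p) (hpt : p ≠ ⊤) (α : ℝ) (f : ℝ → ℝ) :
    wnorm p α f ^ p.toReal = ∫⁻ θ, ENNReal.ofReal (|f (Real.cos θ)| ^ p.toReal) *
      ENNReal.ofReal (Real.sin θ ^ (2 * α * p.toReal + 1)) ∂nu := by
  have hp0 : p ≠ 0 := (lt_of_lt_of_le zero_lt_one hp).ne'
  have hr : 0 < p.toReal := ENNReal.toReal_pos hp0 hpt
  unfold wnorm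
  rw [eLpNorm_eq_lintegral_rpow_enorm_toReal hp0 hpt, ← ENNReal.rpow_mul, one_div,
    inv_mul_cancel₀ hr.ne', ENNReal.rpow_one, ← restrict_Ioo_eq_restrict_Icc, ← image_cos]
  rw [lintegral_image_eq_lintegral_abs_deriv_mul (f' := fun θ => - Real.sin θ) measurableSet_Ioo
    (fun x _ => (Real.hasDerivAt_cos x).hasDerivWithinAt)
    (Real.injOn_cos.mono Ioo_subset_Icc_self)]
  refine setLIntegral_congr_fun measurableSet_Ioo fun θ hθ => ?_
  have hs := Real.sin_pos_of_pos_of_lt_pi hθ.1 hθ.2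
  rw [weight_eq hθ, Real.enorm_eq_ofReal_abs, ENNReal.ofReal_rpow_of_nonneg (abs_nonneg _) hr.le,
    ← ENNReal.ofReal_mul (abs_nonneg _), ← ENNReal.ofReal_mul (by positivity)]
  congr 1
  rw [abs_neg, abs_of_pos hs, abs_mul, Real.mul_rpow (abs_nonneg _) (abs_nonneg _),
    abs_of_pos (Real.rpow_pos_of_pos hs _), ← Real.rpow_mul hs.le, Real.rpow_add hs, Real.rpow_one]
  ring

lemma fin_case (p : ℝ≥0∞) (α : ℝ) (hp : 1 ≤ p) (hpt : p ≠ ⊤) (hα : -(1 / p.toReal) < α) :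
    ∃ C > (0 : ℝ), ∀ n : ℕ, 1 ≤ n → ∀ q : Polynomial ℝ, q.natDegree ≤ n - 1 →
      wnorm p α (Dop fun x => q.eval x) ≤
        ENNReal.ofReal (C * (n : ℝ) ^ 2) * wnorm p α (fun x => q.eval x) := by
  have hp0 : p ≠ 0 := (lt_of_lt_of_le zero_lt_one hp).ne'
  have hr : 0 < p.toReal := ENNReal.toReal_pos hp0 hpt
  have hr1 : 1 ≤ p.toReal := by
    have := ENNReal.toReal_mono hpt hp
    simpa using this
  have hγ : -1 < 2 * α * p.toReal + 1 := by
    have : -1 < α * p.toReal := by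
      have := mul_lt_mul_of_pos_right hα hr
      rwa [neg_mul, one_div, inv_mul_cancel₀ hr.ne'] at this
    linarith
  obtain ⟨C, hC, H⟩ := main_fin _ p.toReal hr1 hγ
  refine ⟨C, hC, fun n hn q hq => ?_⟩
  have := H n hn q (by omega)
  rw [← wnorm_fin p hp hpt, ← wnorm_fin p hp hpt α (fun x => q.eval x), ← ENNReal.ofReal_rpow_of_nonneg (by positivity)
    hr.le, ← ENNReal.mul_rpow_of_nonneg _ _ hr.le, ENNReal.rpow_le_rpow_iff hr] at this
  rw [Dop_eq]
  exact this

/-- Uniform norm version on `(0, π)`. -/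
lemma main_inf (β : ℝ) (hβ : 0 ≤ β) :
    ∃ C : ℝ, 0 < C ∧ ∀ n : ℕ, 1 ≤ n → ∀ q : Polynomial ℝ, q.natDegree ≤ n → ∀ M : ℝ,
      (∀ θ ∈ Ioo (0 : ℝ) π, |q.eval (Real.cos θ)| * Real.sin θ ^ β ≤ M) →
      ∀ θ ∈ Ioo (0 : ℝ) π, |Dq q (Real.cos θ)| * Real.sin θ ^ β ≤ C * n ^ 2 * M := by
  obtain ⟨g, hg⟩ := exists_nat_ge |-β|
  set k := g + 2 with hk
  obtain ⟨d0, d1, d2⟩ := dl_props k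
  set δ := dl k with hδ
  set A : ℝ := (2 * (1 + 2 / δ)) ^ β with hA
  have hA0 : 0 < A := by positivity
  have hc := c0_pos k
  set c1 : ℝ := 11 * 2 ^ k * c0 k with hc1
  have hc10 : 0 < c1 := by positivity
  refine ⟨c1 * 8 * A, by positivity, fun n hn q hq M hM => ?_⟩
  have hn' : (0 : ℝ) < n := by exact_mod_cast hn
  have hcont : ContinuousOn (fun s => |q.eval (Real.cos s)| * wn n β s) (Icc 0 π) := by
    refine ContinuousOn.mul ?_ ?_
    · exact (q.continuous.comp Real.continuous_cos).abs.continuousOn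
    · unfold wn
      exact ((by fun_prop : Continuous fun s : ℝ => Real.sin s + 1 / (n : ℝ)).rpow_const
        fun _ => Or.inr hβ).continuousOn
  obtain ⟨θ0, hθ0, hmax⟩ := isCompact_Icc.exists_isMaxOn
    (nonempty_Icc.2 Real.pi_pos.le) hcont
  set S := |q.eval (Real.cos θ0)| * wn n β θ0 with hS
  have hSmax : ∀ s ∈ Icc (0 : ℝ) π, |q.eval (Real.cos s)| * wn n β s ≤ S := fun s hs => hmax hs
  have hS0 : 0 ≤ S := mul_nonneg (abs_nonneg _) (wn_pos n hn β hθ0.1 hθ0.2).le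
  have hneg : ∀ s ∈ Icc (0 : ℝ) π, wn n (-β) s * wn n β s = 1 := by
    intro s hs
    unfold wn
    rw [← Real.rpow_add (base_pos n hn hs.1 hs.2)]; simp
  have hGr : ∀ θ ∈ Icc (0 : ℝ) π, Gr n k q θ * wn n β θ ≤ 4 * S := by
    intro θ hθ
    have hw := wn_pos n hn β hθ.1 hθ.2
    have hw' := wn_pos n hn (-β) hθ.1 hθ.2
    have h1 : ENNReal.ofReal (Gr n k q θ) ≤ ENNReal.ofReal (S * (4 * wn n (-β) θ)) := by
      rw [Gr_lint]
      calc _ ≤ ∫⁻ s, ENNReal.ofReal S * ENNReal.ofReal (kr n k θ s * wn n (-β) s) ∂nu := by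
            refine setLIntegral_mono' measurableSet_Ioo fun s hs => ?_
            have hs' : s ∈ Icc (0 : ℝ) π := ⟨hs.1.le, hs.2.le⟩
            rw [← ENNReal.ofReal_mul (kr_nonneg _ _ _ _), ← ENNReal.ofReal_mul hS0]
            refine ENNReal.ofReal_le_ofReal ?_
            have a1 := hSmax s hs'
            have a2 := hneg s hs'
            have a3 := wn_pos n hn (-β) hs'.1 hs'.2
            have a4 : |q.eval (Real.cos s)| ≤ S * wn n (-β) s := by
              calc |q.eval (Real.cos s)| = |q.eval (Real.cos s)| * (wn n (-β) s * wn n β s) := by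
                    rw [a2, mul_one]
                _ = (|q.eval (Real.cos s)| * wn n β s) * wn n (-β) s := by ring
                _ ≤ _ := by gcongr
            calc kr n k θ s * |q.eval (Real.cos s)| ≤ kr n k θ s * (S * wn n (-β) s) :=
                  mul_le_mul_of_nonneg_left a4 (kr_nonneg _ _ _ _)
              _ = _ := by ring
        _ = ENNReal.ofReal S * ∫⁻ s, ENNReal.ofReal (kr n k θ s * wn n (-β) s) ∂nu :=
            lintegral_const_mul' _ _ ENNReal.ofReal_ne_top
        _ ≤ ENNReal.ofReal S * ENNReal.ofReal (4 * wn n (-β) θ) :=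
            mul_le_mul_right (KW n hn (-β) g k hg le_rfl hθ.1 hθ.2) _
        _ = _ := (ENNReal.ofReal_mul hS0).symm
    rw [ENNReal.ofReal_le_ofReal_iff (by positivity)] at h1
    have h2 := mul_le_mul_of_nonneg_right h1 hw.le
    have h3 := hneg θ hθ
    calc _ ≤ _ := h2
      _ = 4 * S * (wn n (-β) θ * wn n β θ) := by ring
      _ = 4 * S := by rw [h3, mul_one]
  have hSM : S ≤ 2 * (A * M) := by
    obtain ⟨a, b, c, d⟩ := sg_props n hn d0 d1 hθ0.1 hθ0.2
    have hdiff := pointwise_diff k n hn q hq θ0 (sg n δ θ0) δ d1 a hθ0.1 hθ0.2 b.le c.le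
    rw [d2] at hdiff
    have hw := (wn_pos n hn β hθ0.1 hθ0.2).le
    have hw2 := wn_sg n hn d0 d1 hβ hθ0.1 hθ0.2
    have hMs := hM _ ⟨b, c⟩
    have h1 : S ≤ |q.eval (Real.cos (sg n δ θ0))| * wn n β θ0 +
        1 / 64 * (Gr n k q θ0 * wn n β θ0) := by
      have := mul_le_mul_of_nonneg_right hdiff hw
      rw [hS]; linarith
    have h2 : |q.eval (Real.cos (sg n δ θ0))| * wn n β θ0 ≤ A * M := by
      calc _ ≤ |q.eval (Real.cos (sg n δ θ0))| * (A * Real.sin (sg n δ θ0) ^ β) :=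
            mul_le_mul_of_nonneg_left hw2 (abs_nonneg _)
        _ = A * (|q.eval (Real.cos (sg n δ θ0))| * Real.sin (sg n δ θ0) ^ β) := by ring
        _ ≤ _ := by gcongr
    have h3 := hGr θ0 hθ0
    linarith
  intro θ hθ
  have hsin := Real.sin_pos_of_pos_of_lt_pi hθ.1 hθ.2
  have hD := pointwise_D k n hn q hq θ hθ.1 hθ.2
  have hG := Gr_nonneg n k q θ
  have hle : Real.sin θ ^ β ≤ wn n β θ := by
    refine Real.rpow_le_rpow hsin.le ?_ hβ
    have : (0 : ℝ) ≤ 1 / n := by positivity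
    linarith
  calc |Dq q (Real.cos θ)| * Real.sin θ ^ β ≤ (c1 * n ^ 2 * Gr n k q θ) * wn n β θ :=
        mul_le_mul hD hle (by positivity) (by positivity)
    _ = c1 * n ^ 2 * (Gr n k q θ * wn n β θ) := by ring
    _ ≤ c1 * n ^ 2 * (4 * (2 * (A * M))) := by
        refine mul_le_mul_of_nonneg_left ?_ (by positivity)
        have := hGr θ ⟨hθ.1.le, hθ.2.le⟩
        linarith
    _ = _ := by ring

lemma ae_to_all (f : ℝ → ℝ) (hf : Continuous f) (M : ℝ)
    (h : ∀ᵐ x ∂(volume.restrict (Icc (-1 : ℝ) 1)), f x ≤ M) : ∀ x ∈ Ioo (-1 : ℝ) 1, f x ≤ M := by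
  intro x hx
  by_contra hc
  push Not at hc
  have hopen : IsOpen (Ioo (-1 : ℝ) 1 ∩ {y | M < f y}) :=
    isOpen_Ioo.inter (isOpen_lt continuous_const hf)
  have hpos := hopen.measure_pos volume ⟨x, hx, hc⟩
  rw [← restrict_Ioo_eq_restrict_Icc, ae_restrict_iff' measurableSet_Ioo, ae_iff] at h
  refine hpos.ne' (measure_mono_null ?_ h)
  rintro y ⟨hy1, hy2⟩ hy3
  exact absurd (hy3 hy1) (not_le.2 hy2)

lemma inf_case (α : ℝ) (hα : 0 ≤ α) :
    ∃ C > (0 : ℝ), ∀ n : ℕ, 1 ≤ n → ∀ q : Polynomial ℝ, q.natDegree ≤ n - 1 →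
      wnorm ⊤ α (Dop fun x => q.eval x) ≤
        ENNReal.ofReal (C * (n : ℝ) ^ 2) * wnorm ⊤ α (fun x => q.eval x) := by
  obtain ⟨C, hC, H⟩ := main_inf (2 * α) (by linarith)
  refine ⟨C, hC, fun n hn q hq => ?_⟩
  have hn' : (0 : ℝ) < n := by exact_mod_cast hn
  by_cases htop : wnorm ⊤ α (fun x => q.eval x) = ⊤
  · rw [htop, ENNReal.mul_top]
    · exact le_top
    · simp only [ne_eq, ENNReal.ofReal_eq_zero, not_le]; positivity
  set M := (wnorm ⊤ α (fun x => q.eval x)).toReal with hMdef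
  have hMe : ENNReal.ofReal M = wnorm ⊤ α (fun x => q.eval x) := ENNReal.ofReal_toReal htop
  have hM0 : 0 ≤ M := ENNReal.toReal_nonneg
  have hcont : Continuous fun x : ℝ => |q.eval x * (1 - x ^ 2) ^ α| :=
    (q.continuous.mul ((by fun_prop : Continuous fun x : ℝ => 1 - x ^ 2).rpow_const
      fun _ => Or.inr hα)).abs
  have hae : ∀ᵐ x ∂(volume.restrict (Icc (-1 : ℝ) 1)), |q.eval x * (1 - x ^ 2) ^ α| ≤ M := by
    have := enorm_ae_le_eLpNormEssSup (fun x : ℝ => q.eval x * (1 - x ^ 2) ^ α)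
      (volume.restrict (Icc (-1 : ℝ) 1))
    refine this.mono fun x hx => ?_
    have hx' : ‖q.eval x * (1 - x ^ 2) ^ α‖ₑ ≤ wnorm ⊤ α (fun x => q.eval x) := by
      unfold wnorm; rw [eLpNorm_exponent_top]; exact hx
    rw [← hMe, Real.enorm_eq_ofReal_abs, ENNReal.ofReal_le_ofReal_iff hM0] at hx'
    exact hx'
  have hall := ae_to_all _ hcont M hae
  have hθ : ∀ θ ∈ Ioo (0 : ℝ) π, |q.eval (Real.cos θ)| * Real.sin θ ^ (2 * α) ≤ M := by
    intro θ hθ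
    have hx : Real.cos θ ∈ Ioo (-1 : ℝ) 1 := image_cos ▸ mem_image_of_mem _ hθ
    have := hall _ hx
    rwa [weight_eq hθ, abs_mul, abs_of_pos
      (Real.rpow_pos_of_pos (Real.sin_pos_of_pos_of_lt_pi hθ.1 hθ.2) _)] at this
  have hfin := H n hn q (by omega) M hθ
  rw [Dop_eq, ← hMe, ← ENNReal.ofReal_mul (by positivity)]
  unfold wnorm
  rw [eLpNorm_exponent_top, ← restrict_Ioo_eq_restrict_Icc]
  refine eLpNormEssSup_le_of_ae_bound ?_
  refine (ae_restrict_mem measurableSet_Ioo).mono fun x hx => ?_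
  rw [← image_cos] at hx
  obtain ⟨θ, hθ', rfl⟩ := hx
  rw [weight_eq hθ', Real.norm_eq_abs, abs_mul, abs_of_pos
      (Real.rpow_pos_of_pos (Real.sin_pos_of_pos_of_lt_pi hθ'.1 hθ'.2) _)]
  exact hfin θ hθ'

end DPB

theorem D_polynomial_bound (p : ℝ≥0∞) (α : ℝ) (hp : 1 ≤ p)
    (hα : (p ≠ ⊤ → -(1 / p.toReal) < α) ∧ (p = ⊤ → 0 ≤ α)) :
    ∃ C > (0 : ℝ), ∀ n : ℕ, 1 ≤ n → ∀ q : Polynomial ℝ, q.natDegree ≤ n - 1 →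
      wnorm p α (Dop fun x => q.eval x) ≤
        ENNReal.ofReal (C * (n : ℝ) ^ 2) * wnorm p α (fun x => q.eval x) := by
  by_cases hpt : p = ⊤
  · subst hpt
    exact DPB.inf_case α (hα.2 rfl)
  · exact DPB.fin_case p α hp hpt (hα.1 hpt)
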